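/- arXiv:2206.06889 — 3 statements merged into one kernel-verified Lean document; each statement's English description precedes it below -/
import Mathlib

section
/- Let ℓ ≥ 1. Every d ∈ ℤ^(ℤ/ℓℤ) can be written in the form d = Res_ℓ(ν) + n·δ_ℓ with ν an ℓ-core and n ∈ ℤ, and this presentation is unique: if Res_ℓ(ν) + n·δ_ℓ = Res_ℓ(ν′) + n′·δ_ℓ with ν, ν′ ℓ-cores and n, n′ ∈ ℤ, then ν = ν′ and n = n′. -/
namespace CM

/-- The `∞`-residue of a box. -/
def rsd (c : ℕ × ℕ) : ℤ := (c.2 : ℤ) - (c.1 : ℤ)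

/-- The `ℓ`-residue of a box. -/
def res (ℓ : ℕ) (c : ℕ × ℕ) : ZMod ℓ := (rsd c : ZMod ℓ)

/-- `Res_ℓ(μ) ∈ ℤ^(ℤ/ℓℤ)`: the number of boxes of each `ℓ`-residue. -/
def Res (ℓ : ℕ) (μ : YoungDiagram) : ZMod ℓ → ℤ := fun i =>
  ((μ.cells.filter (fun c => res ℓ c = i)).card : ℤ)

/-- The constant vector `δ_ℓ = (1,…,1)`. -/
def delta (ℓ : ℕ) : ZMod ℓ → ℤ := fun _ => 1

/-- A box is removable if deleting it leaves a Young diagram. -/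
def IsRemovable (μ : YoungDiagram) (c : ℕ × ℕ) : Prop :=
  c ∈ μ.cells ∧ ∃ ν : YoungDiagram, ν.cells = μ.cells.erase c

/-- A box is addable if adjoining it yields a Young diagram. -/
def IsAddable (μ : YoungDiagram) (c : ℕ × ℕ) : Prop :=
  c ∉ μ.cells ∧ ∃ ν : YoungDiagram, ν.cells = insert c μ.cells

/-- One step: delete one removable box. -/
def RemoveStep (μ ν : YoungDiagram) : Prop :=
  ∃ c, IsRemovable μ c ∧ ν.cells = μ.cells.erase c

/-- `ν` is obtainable from `μ` by successively deleting removable boxes. -/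
def Obtainable (μ ν : YoungDiagram) : Prop :=
  Relation.ReflTransGen RemoveStep μ ν

/-- `λ` is an `ℓ`-core: no partition obtainable from `λ` by deleting removable boxes
differs from `λ` by exactly `ℓ` boxes of pairwise distinct `ℓ`-residues. -/
def IsCore (ℓ : ℕ) (lam : YoungDiagram) : Prop :=
  ¬ ∃ μ : YoungDiagram, Obtainable lam μ ∧ (lam.cells \ μ.cells).card = ℓ ∧
      Set.InjOn (res ℓ) ↑(lam.cells \ μ.cells)

/-- One step of the `ℓ`-core process: delete (via removable-box deletions) `ℓ` boxes
of pairwise distinct `ℓ`-residues. -/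
def CoreStep (ℓ : ℕ) (μ ν : YoungDiagram) : Prop :=
  Obtainable μ ν ∧ (μ.cells \ ν.cells).card = ℓ ∧
    Set.InjOn (res ℓ) ↑(μ.cells \ ν.cells)

/-- `ν` is the `ℓ`-core of `λ`: it is an `ℓ`-core reached from `λ` by the core process. -/
def ReachesCore (ℓ : ℕ) (lam ν : YoungDiagram) : Prop :=
  Relation.ReflTransGen (CoreStep ℓ) lam ν ∧ IsCore ℓ ν

/-- the cell with content `k` and position `t` on its diagonal -/
def cellAt (k : ℤ) (t : ℕ) : ℕ × ℕ := (t + (-k).toNat, t + k.toNat)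

/-- number of boxes of content `k` -/
def dg (μ : YoungDiagram) (k : ℤ) : ℕ := (μ.cells.filter (fun c => rsd c = k)).card

theorem rsd_cellAt (k : ℤ) (t : ℕ) : rsd (cellAt k t) = k := by
  simp only [rsd, cellAt]; omega

theorem cellAt_rsd (c : ℕ × ℕ) : cellAt (rsd c) (min c.1 c.2) = c := by
  obtain ⟨a, b⟩ := c
  simp only [rsd, cellAt, Prod.mk.injEq]; omega

theorem cellAt_mem (μ : YoungDiagram) (k : ℤ) (t : ℕ) : cellAt k t ∈ μ ↔ t < dg μ k := by
  have low : ∀ s t : ℕ, s ≤ t → cellAt k t ∈ μ → cellAt k s ∈ μ := by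
    intro s t hst h
    refine μ.up_left_mem ?_ ?_ h <;> omega
  have hinj : Function.Injective (cellAt k) := by
    intro a b h
    simp only [cellAt, Prod.mk.injEq] at h; omega
  have hex : ∃ t, cellAt k t ∉ μ := by
    by_contra hcon
    push Not at hcon
    exact Set.infinite_of_injective_forall_mem (s := (μ.cells : Set (ℕ × ℕ))) hinj
      (fun t => by simpa using hcon t) μ.cells.finite_toSet
  classical
  have key : ∀ t, cellAt k t ∈ μ ↔ t < Nat.find hex := by
    intro t
    constructor
    · intro h
      by_contra hlt
      exact Nat.find_spec hex (low _ _ (not_lt.mp hlt) h)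
    · intro h
      exact not_not.mp (Nat.find_min hex h)
  have himg : μ.cells.filter (fun c => rsd c = k) = (Finset.range (Nat.find hex)).image (cellAt k) := by
    ext c
    simp only [Finset.mem_filter, Finset.mem_image, Finset.mem_range, YoungDiagram.mem_cells]
    constructor
    · rintro ⟨hc, rfl⟩
      refine ⟨min c.1 c.2, ?_, cellAt_rsd c⟩
      rw [← key, cellAt_rsd]; exact hc
    · rintro ⟨t, ht, rfl⟩
      exact ⟨(key t).2 ht, rsd_cellAt k t⟩
  have : dg μ k = Nat.find hex := by
    rw [dg, himg, Finset.card_image_of_injective _ hinj, Finset.card_range]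
  rw [this]; exact key t

theorem mem_iff_dg (μ : YoungDiagram) (c : ℕ × ℕ) : c ∈ μ ↔ min c.1 c.2 < dg μ (rsd c) := by
  rw [← cellAt_mem, cellAt_rsd]

theorem dg_nonneg_step (μ : YoungDiagram) (k : ℤ) (hk : 0 ≤ k) :
    dg μ (k+1) ≤ dg μ k ∧ dg μ k ≤ dg μ (k+1) + 1 := by
  constructor
  · by_contra h
    push Not at h
    have h1 := (cellAt_mem μ (k+1) (dg μ k)).2 h
    have h2 : cellAt k (dg μ k) ∈ μ := by
      refine μ.up_left_mem ?_ ?_ h1 <;> omega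
    rw [cellAt_mem] at h2; omega
  · by_contra h
    push Not at h
    have h1 := (cellAt_mem μ k (dg μ (k+1) + 1)).2 h
    have h2 : cellAt (k+1) (dg μ (k+1)) ∈ μ := by
      refine μ.up_left_mem ?_ ?_ h1 <;> omega
    rw [cellAt_mem] at h2; omega

theorem dg_neg_step (μ : YoungDiagram) (k : ℤ) (hk : k < 0) :
    dg μ k ≤ dg μ (k+1) ∧ dg μ (k+1) ≤ dg μ k + 1 := by
  constructor
  · by_contra h
    push Not at h
    have h1 := (cellAt_mem μ k (dg μ (k+1))).2 h
    have h2 : cellAt (k+1) (dg μ (k+1)) ∈ μ := by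
      refine μ.up_left_mem ?_ ?_ h1 <;> omega
    rw [cellAt_mem] at h2; omega
  · by_contra h
    push Not at h
    have h1 := (cellAt_mem μ (k+1) (dg μ k + 1)).2 h
    have h2 : cellAt k (dg μ k) ∈ μ := by
      refine μ.up_left_mem ?_ ?_ h1 <;> omega
    rw [cellAt_mem] at h2; omega

/-- bead indicator -/
def chi (μ : YoungDiagram) (k : ℤ) : ℤ := dg μ k - dg μ (k+1) + if k < 0 then 1 else 0

theorem chi_cases (μ : YoungDiagram) (k : ℤ) : chi μ k = 0 ∨ chi μ k = 1 := by
  unfold chi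
  split_ifs with h
  · have := dg_neg_step μ k h; omega
  · have := dg_nonneg_step μ k (by omega); omega

theorem dg_pos_right (μ : YoungDiagram) (j : ℤ) (hj : 0 ≤ j) (m : ℕ) :
    dg μ (j + m) ≤ dg μ j := by
  induction m with
  | zero => simp
  | succ m ih =>
    have := (dg_nonneg_step μ (j+m) (by omega)).1
    push_cast
    rw [← add_assoc]; omega

theorem dg_pos_left (μ : YoungDiagram) (j : ℤ) (m : ℕ) (hj : j + m ≤ 0) :
    dg μ j ≤ dg μ (j + m) := by
  induction m with
  | zero => simp
  | succ m ih =>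
    push_cast at hj ⊢
    have := (dg_neg_step μ (j+m) (by omega)).1
    have := ih (by omega)
    rw [← add_assoc]; omega

theorem obtainable_of_subset (n : ℕ) : ∀ (ν μ : YoungDiagram), μ.cells ⊆ ν.cells →
    (ν.cells \ μ.cells).card = n → Obtainable ν μ := by
  induction n with
  | zero =>
    intro ν μ h hc
    rw [Finset.card_eq_zero, Finset.sdiff_eq_empty_iff_subset] at hc
    have : ν = μ := YoungDiagram.ext (Finset.Subset.antisymm hc h)
    subst this
    exact Relation.ReflTransGen.refl
  | succ n ih =>
    intro ν μ h hc
    have hne : (ν.cells \ μ.cells).Nonempty := by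
      rw [← Finset.card_pos]; omega
    obtain ⟨c, hcm, hmax⟩ := Finset.exists_max_image _ (fun c : ℕ × ℕ => c.1 + c.2) hne
    have hcm' := hcm
    rw [Finset.mem_sdiff] at hcm
    let ν' : YoungDiagram := ⟨ν.cells.erase c, by
      intro a b hba ha
      simp only [Finset.coe_erase, Set.mem_sdiff, Finset.mem_coe, Set.mem_singleton_iff] at ha ⊢
      refine ⟨ν.isLowerSet hba ha.1, ?_⟩
      rintro rfl
      by_cases hμ : a ∈ μ.cells
      · exact hcm.2 (μ.isLowerSet hba hμ)
      · have := hmax a (Finset.mem_sdiff.2 ⟨ha.1, hμ⟩)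
        have h1 := hba.1
        have h2 := hba.2
        exact ha.2 (Prod.ext (by omega) (by omega))⟩
    have hstep : RemoveStep ν ν' := ⟨c, ⟨hcm.1, ν', rfl⟩, rfl⟩
    refine Relation.ReflTransGen.head hstep (ih ν' μ ?_ ?_)
    · intro x hx
      refine Finset.mem_erase.2 ⟨?_, h hx⟩
      rintro rfl
      exact hcm.2 hx
    · have : ν'.cells \ μ.cells = (ν.cells \ μ.cells).erase c := by
        ext x; simp only [ν', Finset.mem_sdiff, Finset.mem_erase]; tauto
      rw [this, Finset.card_erase_of_mem hcm', hc]; rfl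

theorem subset_of_obtainable {ν μ : YoungDiagram} (h : Obtainable ν μ) : μ.cells ⊆ ν.cells := by
  induction h with
  | refl => exact Finset.Subset.refl _
  | tail _ hs ih =>
    obtain ⟨c, _, hc⟩ := hs
    rw [hc]
    exact (Finset.erase_subset _ _).trans ih

/-- lower a diagram along a strip of contents -/
theorem exists_lower (ν : YoungDiagram) (f : ℤ → ℤ) 
    (h0 : ∀ k, 0 ≤ k → f (k+1) ≤ f k ∧ f k ≤ f (k+1) + 1)
    (h1 : ∀ k, k < 0 → f k ≤ f (k+1) ∧ f (k+1) ≤ f k + 1) :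
    ∃ μ : YoungDiagram, μ.cells = ν.cells.filter (fun c => ((min c.1 c.2 : ℕ) : ℤ) < f (rsd c)) := by
  have s1 : ∀ i j : ℕ, ((min (i+1) j : ℕ) : ℤ) < f (rsd (i+1, j)) →
      ((min i j : ℕ) : ℤ) < f (rsd (i, j)) := by
    intro i j h
    have e : rsd (i, j) = rsd (i+1, j) + 1 := by simp only [rsd]; push_cast; ring
    rw [e]
    have ee : rsd (i+1, j) = (j : ℤ) - i - 1 := by simp only [rsd]; push_cast; ring
    by_cases hk : 0 ≤ rsd (i+1, j)
    · have := h0 _ hk; omega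
    · have := h1 _ (not_le.mp hk); omega
  have s2 : ∀ i j : ℕ, ((min i (j+1) : ℕ) : ℤ) < f (rsd (i, j+1)) →
      ((min i j : ℕ) : ℤ) < f (rsd (i, j)) := by
    intro i j h
    have e : rsd (i, j+1) = rsd (i, j) + 1 := by simp only [rsd]; push_cast; ring
    rw [e] at h
    have ee : rsd (i, j) = (j : ℤ) - i := by simp only [rsd]
    by_cases hk : 0 ≤ rsd (i, j)
    · have := h0 _ hk; omega
    · have := h1 _ (not_le.mp hk); omega
  have t1 : ∀ m i j : ℕ, ((min (i+m) j : ℕ) : ℤ) < f (rsd (i+m, j)) →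
      ((min i j : ℕ) : ℤ) < f (rsd (i, j)) := by
    intro m
    induction m with
    | zero => intro i j h; exact h
    | succ m ih => intro i j h; exact ih i j (s1 (i+m) j h)
  have t2 : ∀ m i j : ℕ, ((min i (j+m) : ℕ) : ℤ) < f (rsd (i, j+m)) →
      ((min i j : ℕ) : ℤ) < f (rsd (i, j)) := by
    intro m
    induction m with
    | zero => intro i j h; exact h
    | succ m ih => intro i j h; exact ih i j (s2 i (j+m) h)
  refine ⟨⟨ν.cells.filter (fun c => ((min c.1 c.2 : ℕ) : ℤ) < f (rsd c)), ?_⟩, rfl⟩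
  rintro ⟨a, b⟩ ⟨a', b'⟩ hle hmem
  rw [Finset.mem_coe, Finset.mem_filter] at hmem ⊢
  refine ⟨ν.isLowerSet hle hmem.1, ?_⟩
  obtain ⟨ha, hb⟩ := Prod.mk_le_mk.1 hle
  obtain ⟨m, rfl⟩ := Nat.exists_eq_add_of_le ha
  obtain ⟨m', rfl⟩ := Nat.exists_eq_add_of_le hb
  exact t2 m' _ _ (t1 m _ _ hmem.2)

theorem core_packed (ℓ : ℕ) [NeZero ℓ] (ν : YoungDiagram) (hc : IsCore ℓ ν) (k : ℤ)
    (hk : chi ν k = 1) : chi ν (k - ℓ) = 1 := by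
  have hl : 0 < ℓ := Nat.pos_of_ne_zero (NeZero.ne ℓ)
  rcases chi_cases ν (k - ℓ) with h0 | h
  swap
  · exact h
  exfalso
  apply hc
  let f : ℤ → ℤ := fun j => dg ν j - if k - ℓ < j ∧ j ≤ k then 1 else 0
  have hf : ∀ j, f j = dg ν j - if k - ℓ < j ∧ j ≤ k then 1 else 0 := fun _ => rfl
  have hchi : ∀ j, chi ν j = dg ν j - dg ν (j+1) + if j < 0 then 1 else 0 := fun _ => rfl
  have hstep : ∀ j, f j - f (j+1) + (if j < 0 then 1 else 0) = 0 ∨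
      f j - f (j+1) + (if j < 0 then 1 else 0) = 1 := by
    intro j
    have e : f j - f (j+1) + (if j < 0 then 1 else 0) = chi ν j -
      (if k - ℓ < j ∧ j ≤ k then 1 else 0) + (if k - ℓ < j+1 ∧ j+1 ≤ k then 1 else 0) := by
      rw [hf, hf, hchi]; ring
    rw [e]
    by_cases e1 : j = k
    · subst e1
      rw [hk, if_pos (by omega), if_neg (by omega)]; simp
    · by_cases e2 : j = k - ℓ
      · subst e2
        rw [h0, if_neg (by omega), if_pos (by omega)]; simp
      · have := chi_cases ν j
        split_ifs <;> omega
  obtain ⟨μ, hμ⟩ := exists_lower ν f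
    (fun j hj => by have := hstep j; rw [if_neg (by omega)] at this; omega)
    (fun j hj => by have := hstep j; rw [if_pos (by omega)] at this; omega)
  have hpos : ∀ j, k - ℓ < j → j ≤ k → 0 < dg ν j := by
    intro j hj1 hj2
    rw [hchi] at hk h0
    by_cases hj : 0 ≤ j
    · rw [if_neg (by omega)] at hk
      obtain ⟨m, hm⟩ := Int.eq_ofNat_of_zero_le (sub_nonneg.2 hj2)
      have := dg_pos_right ν j hj m
      rw [← hm, add_sub_cancel] at this
      omega
    · rw [if_pos (by omega)] at h0
      obtain ⟨m, hm⟩ := Int.eq_ofNat_of_zero_le (show 0 ≤ j - (k - ℓ + 1) by omega)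
      have := dg_pos_left ν (k - ℓ + 1) m (by omega)
      rw [← hm, add_sub_cancel] at this
      omega
  have hdiff : ∀ c, c ∈ ν.cells \ μ.cells ↔
      (k - ℓ < rsd c ∧ rsd c ≤ k) ∧ min c.1 c.2 + 1 = dg ν (rsd c) := by
    intro c
    rw [Finset.mem_sdiff, hμ, Finset.mem_filter, YoungDiagram.mem_cells, mem_iff_dg, hf]
    split_ifs with h
    · have := hpos _ h.1 h.2
      omega
    · omega
  have hsub : μ.cells ⊆ ν.cells := by rw [hμ]; exact Finset.filter_subset _ _
  have hinj : Set.InjOn rsd (ν.cells \ μ.cells : Finset (ℕ × ℕ)) := by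
    intro c hc c' hc' h
    have h1 := ((hdiff c).1 hc).2
    have h2 := ((hdiff c').1 hc').2
    rw [← cellAt_rsd c, ← cellAt_rsd c', h]
    rw [h] at h1
    congr 1; omega
  refine ⟨μ, obtainable_of_subset _ ν μ hsub rfl, ?_, ?_⟩
  · rw [← Finset.card_image_of_injOn hinj]
    have : (ν.cells \ μ.cells).image rsd = Finset.Ioc (k - ℓ) k := by
      ext j
      rw [Finset.mem_image, Finset.mem_Ioc]
      constructor
      · rintro ⟨c, hc, rfl⟩
        exact ((hdiff c).1 hc).1
      · intro hj
        have hp := hpos j hj.1 hj.2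
        refine ⟨cellAt j (dg ν j - 1), ?_, rsd_cellAt _ _⟩
        rw [hdiff, rsd_cellAt]
        refine ⟨hj, ?_⟩
        simp only [cellAt]; omega
    rw [this, Int.card_Ioc]; omega
  · intro c hc c' hc' h
    apply hinj hc hc'
    have h1 := ((hdiff c).1 hc).1
    have h2 := ((hdiff c').1 hc').1
    unfold res at h
    rw [ZMod.intCast_eq_intCast_iff_dvd_sub] at h
    obtain ⟨q, hq⟩ := h
    have hq1 : q < 1 := by
      by_contra hh
      have : (ℓ : ℤ) * 1 ≤ ℓ * q := mul_le_mul_of_nonneg_left (by omega) (by omega)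
      omega
    have hq2 : -1 < q := by
      by_contra hh
      have : (ℓ : ℤ) * q ≤ ℓ * (-1) := mul_le_mul_of_nonneg_left (by omega) (by omega)
      omega
    have : q = 0 := by omega
    subst this
    omega

theorem hasSum_Res (ℓ : ℕ) (μ : YoungDiagram) (i : ZMod ℓ) :
    HasSum (fun k : ℤ => if (k : ZMod ℓ) = i then (dg μ k : ℤ) else 0) (Res ℓ μ i) := by
  classical
  have h := hasSum_sum_of_ne_finset_zero (L := SummationFilter.unconditional ℤ)
    (f := fun k : ℤ => if (k : ZMod ℓ) = i then (dg μ k : ℤ) else 0)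
    (s := μ.cells.image rsd) (by
      intro k hk
      have : dg μ k = 0 := by
        rw [dg, Finset.card_eq_zero, Finset.filter_eq_empty_iff]
        intro c hc hck
        exact hk (Finset.mem_image.2 ⟨c, hc, hck⟩)
      simp [this])
  convert h using 1
  unfold Res
  rw [Finset.card_eq_sum_card_fiberwise (f := rsd) (t := μ.cells.image rsd)
    (fun c hc => by
      have := (Finset.mem_filter.1 hc).1
      exact Finset.mem_coe.2 (Finset.mem_image_of_mem _ this))]
  push_cast
  refine Finset.sum_congr rfl fun k _ => ?_
  rw [Finset.filter_filter]
  split_ifs with hk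
  · unfold dg
    congr 2
    ext c
    rw [Finset.mem_filter, Finset.mem_filter]
    constructor
    · rintro ⟨a, b, c⟩; exact ⟨a, c⟩
    · rintro ⟨a, rfl⟩; exact ⟨a, hk, rfl⟩
  · rw [Nat.cast_eq_zero, Finset.card_eq_zero, Finset.filter_eq_empty_iff]
    rintro c _ ⟨h1, rfl⟩
    exact hk h1

theorem hasSum_chi (ℓ : ℕ) (ν ν' : YoungDiagram) (C : ℤ)
    (h : ∀ i, Res ℓ ν i - Res ℓ ν' i = C) (i : ZMod ℓ) :
    HasSum (fun k : ℤ => if (k : ZMod ℓ) = i then chi ν k - chi ν' k else 0) 0 := by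
  have a1 := (hasSum_Res ℓ ν i).sub (hasSum_Res ℓ ν' i)
  have a2 := (hasSum_Res ℓ ν (i+1)).sub (hasSum_Res ℓ ν' (i+1))
  rw [h] at a1 a2
  rw [← (Equiv.addRight (1:ℤ)).hasSum_iff] at a2
  have a3 := a1.sub a2
  rw [sub_self] at a3
  refine Eq.mp (congrArg (fun g : ℤ → ℤ => HasSum g 0) (funext fun k => ?_)) a3
  simp only [Function.comp, Equiv.coe_addRight, Int.cast_add, Int.cast_one, add_left_inj, chi]
  split_ifs <;> ring

theorem packed_le (ℓ : ℕ) [NeZero ℓ] (ν : YoungDiagram)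
    (hp : ∀ k, chi ν k = 1 → chi ν (k - ℓ) = 1) (m : ℕ) : ∀ k, chi ν k = 1 → chi ν (k - ℓ * m) = 1 := by
  induction m with
  | zero => intro k h; simpa using h
  | succ m ih =>
    intro k h
    have := hp _ (ih k h)
    rw [← this]; congr 1; push_cast; ring

theorem chi_eq (ℓ : ℕ) [NeZero ℓ] (ν ν' : YoungDiagram)
    (hp : ∀ k, chi ν k = 1 → chi ν (k - ℓ) = 1)
    (hp' : ∀ k, chi ν' k = 1 → chi ν' (k - ℓ) = 1) (C : ℤ)
    (h : ∀ i, Res ℓ ν i - Res ℓ ν' i = C) (k : ℤ) : chi ν k = chi ν' k := by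
  have hl : 0 < ℓ := Nat.pos_of_ne_zero (NeZero.ne ℓ)
  by_contra hne
  wlog hgt : chi ν k = 1 ∧ chi ν' k = 0 generalizing ν ν' C
  · refine this ν' ν hp' hp (-C) (fun i => by rw [← h i]; ring) (fun e => hne e.symm) ?_
    have := chi_cases ν k
    have := chi_cases ν' k
    omega
  have hs := hasSum_chi ℓ ν ν' C h (k : ZMod ℓ)
  have hnn : ∀ j : ℤ, 0 ≤ (if (j : ZMod ℓ) = k then chi ν j - chi ν' j else 0) := by
    intro j
    split_ifs with hj
    swap
    · exact le_rfl
    by_contra hlt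
    have b1 : chi ν j = 0 ∧ chi ν' j = 1 := by
      have := chi_cases ν j
      have := chi_cases ν' j
      omega
    rw [ZMod.intCast_eq_intCast_iff_dvd_sub] at hj
    obtain ⟨q, hq⟩ := hj
    by_cases hq0 : 0 ≤ q
    · obtain ⟨m, rfl⟩ := Int.eq_ofNat_of_zero_le hq0
      have := packed_le ℓ ν hp m k hgt.1
      rw [← hq, sub_sub_cancel] at this
      omega
    · obtain ⟨m, hm⟩ := Int.eq_ofNat_of_zero_le (show 0 ≤ -q by omega)
      have := packed_le ℓ ν' hp' m j b1.2
      rw [← hm, show j - ℓ * -q = k by linarith] at this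
      omega
  have := (hasSum_zero_iff_of_nonneg hnn).1 hs
  have := congrFun this k
  simp only [if_true, Pi.zero_apply] at this
  omega

theorem eq_of_chi (ν ν' : YoungDiagram) (h : ∀ k, chi ν k = chi ν' k) : ν = ν' := by
  have hd : ∀ k, (dg ν k : ℤ) - dg ν' k = dg ν (k+1) - dg ν' (k+1) := by
    intro k
    have := h k
    unfold chi at this
    linarith
  have hd2 : ∀ (m : ℕ) k, (dg ν k : ℤ) - dg ν' k = dg ν (k+m) - dg ν' (k+m) := by
    intro m
    induction m with
    | zero => intro k; simp
    | succ m ih => intro k; rw [ih, hd]; push_cast; rw [add_assoc]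
  have hz : ∀ μ : YoungDiagram, ∃ B : ℤ, ∀ k, B < k → dg μ k = 0 := by
    intro μ
    obtain ⟨B, hB⟩ := (μ.cells.image rsd).bddAbove
    refine ⟨B, fun k hk => ?_⟩
    rw [dg, Finset.card_eq_zero, Finset.filter_eq_empty_iff]
    rintro c hc rfl
    have : rsd c ≤ B := hB (Finset.mem_coe.2 (Finset.mem_image_of_mem _ hc))
    omega
  have hdg : ∀ k, dg ν k = dg ν' k := by
    intro k
    obtain ⟨B, hB⟩ := hz ν
    obtain ⟨B', hB'⟩ := hz ν'
    have := hd2 ((B - k).toNat + (B' - k).toNat + 1) k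
    have z1 := hB (k + ((B - k).toNat + (B' - k).toNat + 1 : ℕ)) (by omega)
    have z2 := hB' (k + ((B - k).toNat + (B' - k).toNat + 1 : ℕ)) (by omega)
    rw [z1, z2] at this
    omega
  ext c
  rw [YoungDiagram.mem_cells, YoungDiagram.mem_cells, mem_iff_dg, mem_iff_dg, hdg]

theorem Res_coreStep (ℓ : ℕ) [NeZero ℓ] (ν μ : YoungDiagram) (h : CoreStep ℓ ν μ) (i : ZMod ℓ) :
    Res ℓ ν i = Res ℓ μ i + 1 := by
  classical
  obtain ⟨ho, hcard, hinj⟩ := h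
  have hsub := subset_of_obtainable ho
  have himg : (ν.cells \ μ.cells).image (res ℓ) = Finset.univ := by
    apply Finset.eq_univ_of_card
    rw [Finset.card_image_of_injOn hinj, hcard, ZMod.card]
  have h1 : ((ν.cells \ μ.cells).filter (fun c => res ℓ c = i)).card = 1 := by
    have : i ∈ (ν.cells \ μ.cells).image (res ℓ) := by rw [himg]; exact Finset.mem_univ _
    obtain ⟨c, hc, rfl⟩ := Finset.mem_image.1 this
    rw [Finset.card_eq_one]
    refine ⟨c, ?_⟩
    ext x
    rw [Finset.mem_filter, Finset.mem_singleton]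
    constructor
    · rintro ⟨hx, hr⟩; exact hinj hx hc hr
    · rintro rfl; exact ⟨hc, rfl⟩
  unfold Res
  have h2 : ν.cells.filter (fun c => res ℓ c = i) = μ.cells.filter (fun c => res ℓ c = i) ∪
      (ν.cells \ μ.cells).filter (fun c => res ℓ c = i) := by
    rw [← Finset.filter_union, Finset.union_sdiff_of_subset hsub]
  rw [h2, Finset.card_union_of_disjoint, h1]
  · push_cast; rfl
  · exact Finset.disjoint_filter_filter Finset.disjoint_sdiff

theorem exists_core (ℓ : ℕ) [NeZero ℓ] (N : ℕ) : ∀ μ : YoungDiagram, μ.cells.card = N →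
    ∃ (ν : YoungDiagram) (n : ℤ), IsCore ℓ ν ∧ ∀ i, Res ℓ μ i = Res ℓ ν i + n := by
  induction N using Nat.strong_induction_on with
  | _ N ih =>
    intro μ hN
    by_cases hc : IsCore ℓ μ
    · exact ⟨μ, 0, hc, fun i => by simp⟩
    · unfold IsCore at hc
      rw [not_not] at hc
      obtain ⟨μ', hs⟩ := hc
      have hr := Res_coreStep ℓ μ μ' hs
      have hsub := subset_of_obtainable hs.1
      have := Finset.card_sdiff_add_card_eq_card hsub
      have hl : 0 < ℓ := Nat.pos_of_ne_zero (NeZero.ne ℓ)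
      have h2 := hs.2.1
      obtain ⟨ν, n, hν, hn⟩ := ih μ'.cells.card (by omega) μ' rfl
      exact ⟨ν, n + 1, hν, fun i => by rw [hr, hn]; ring⟩

/-- each residue occurs `q` times among `ℓ * q` consecutive numbers -/
theorem count_row (ℓ : ℕ) [NeZero ℓ] (x : ZMod ℓ) (q : ℕ) :
    ((Finset.range (ℓ * q)).filter (fun j : ℕ => (j : ZMod ℓ) = x)).card = q := by
  have hl : 0 < ℓ := Nat.pos_of_ne_zero (NeZero.ne ℓ)
  have : (Finset.range (ℓ * q)).filter (fun j : ℕ => (j : ZMod ℓ) = x) =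
      (Finset.range q).image (fun t => x.val + ℓ * t) := by
    ext j
    simp only [Finset.mem_filter, Finset.mem_range, Finset.mem_image]
    have hx := ZMod.val_lt x
    constructor
    · rintro ⟨h1, rfl⟩
      refine ⟨j / ℓ, Nat.div_lt_of_lt_mul h1, ?_⟩
      rw [ZMod.val_natCast]
      exact Nat.mod_add_div j ℓ
    · rintro ⟨t, ht, rfl⟩
      constructor
      · calc x.val + ℓ * t < ℓ + ℓ * t := by omega
          _ = ℓ * (t + 1) := by ring
          _ ≤ ℓ * q := Nat.mul_le_mul_left _ ht
      · simp
  rw [this, Finset.card_image_of_injective, Finset.card_range]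
  intro a b h
  simp only [add_right_inj] at h
  exact Nat.eq_of_mul_eq_mul_left hl h

theorem exists_partition (ℓ : ℕ) [NeZero ℓ] (d : ZMod ℓ → ℤ) :
    ∃ (μ : YoungDiagram) (n : ℤ), ∀ i, d i = Res ℓ μ i + n := by
  classical
  have hl : 0 < ℓ := Nat.pos_of_ne_zero (NeZero.ne ℓ)
  obtain ⟨m, hm⟩ : ∃ m, ∀ i, m ≤ d i := by
    obtain ⟨i, hi⟩ := Finite.exists_min d
    exact ⟨d i, hi⟩
  obtain ⟨M, hM⟩ : ∃ M, ∀ i, d i ≤ M := by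
    obtain ⟨i, hi⟩ := Finite.exists_max d
    exact ⟨d i, hi⟩
  obtain ⟨e, he⟩ : ∃ e : ZMod ℓ → ℕ, ∀ i, d i = m + e i :=
    ⟨fun i => (d i - m).toNat, fun i => by have := hm i; dsimp only; omega⟩
  let Q := (M - m).toNat
  have hQ : ∀ i, e i ≤ Q := fun i => by
    have := hM i; have := he i; simp only [Q]; omega
  let N := ℓ * Q
  let ε : ℕ → ℕ := fun i => if i / ℓ < e (-(i : ZMod ℓ)) then 1 else 0
  have hε : ∀ i, ε i ≤ 1 := fun i => by simp only [ε]; split_ifs <;> omega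
  let r : ℕ → ℕ := fun i => ℓ * (N - i) + ε i
  have hr0 : ∀ i j, i < j → j < N → r j ≤ r i := by
    intro i j hij hj
    have h1 : ℓ * (N - j) + ℓ ≤ ℓ * (N - i) := by
      rw [← Nat.mul_succ]; exact Nat.mul_le_mul_left _ (by omega)
    have := hε j
    simp only [r]; omega
  let μ : YoungDiagram := ⟨(Finset.range N).biUnion (fun i => (Finset.range (r i)).image (fun j => (i, j))), by
    rintro ⟨a, b⟩ ⟨a', b'⟩ hle hmem
    obtain ⟨ha, hb⟩ := Prod.mk_le_mk.1 hle
    simp only [Finset.coe_biUnion, Set.mem_iUnion, Finset.coe_image, Set.mem_image, Finset.mem_coe,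
      Finset.mem_range, Prod.mk.injEq, exists_prop] at hmem ⊢
    obtain ⟨i, hi, j, hj, rfl, rfl⟩ := hmem
    refine ⟨a', by omega, b', ?_, rfl, rfl⟩
    rcases ha.lt_or_eq with h | rfl
    · have := hr0 _ _ h hi; omega
    · omega⟩
  have hres : ∀ x, Res ℓ μ x = ((∑ i ∈ Finset.range N, (N - i) : ℕ) : ℤ) + e x := by
    intro x
    have h1 : (μ.cells.filter (fun c => res ℓ c = x)).card =
        ∑ i ∈ Finset.range N, ((Finset.range (r i)).filter (fun j : ℕ => (j : ZMod ℓ) = x + i)).card := by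
      rw [Finset.card_eq_sum_card_fiberwise (f := Prod.fst) (t := Finset.range N)]
      · refine Finset.sum_congr rfl fun i hi => ?_
        rw [← Finset.card_image_of_injective (f := fun j : ℕ => (i, j)) _
          (fun a b h => (Prod.mk.injEq _ _ _ _ ▸ h).2)]
        congr 1
        ext ⟨a, b⟩
        simp only [μ, Finset.mem_filter, Finset.mem_biUnion, Finset.mem_image, Finset.mem_range,
          Prod.mk.injEq, res, rsd, Int.cast_sub, Int.cast_natCast, sub_eq_iff_eq_add]
        constructor
        · rintro ⟨⟨⟨i', hi', j, hj, rfl, rfl⟩, h⟩, rfl⟩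
          exact ⟨j, ⟨hj, h⟩, rfl, rfl⟩
        · rintro ⟨j, ⟨hj, h⟩, rfl, rfl⟩
          exact ⟨⟨⟨i, Finset.mem_range.1 hi, j, hj, rfl, rfl⟩, h⟩, rfl⟩
      · rintro ⟨a, b⟩ hc
        simp only [μ, Finset.mem_coe, Finset.mem_filter, Finset.mem_biUnion, Finset.mem_image,
          Finset.mem_range, Prod.mk.injEq] at hc
        obtain ⟨⟨i, hi, j, hj, rfl, rfl⟩, _⟩ := hc
        simpa using hi
    have h2 : ∀ i, ((Finset.range (r i)).filter (fun j : ℕ => (j : ZMod ℓ) = x + i)).card =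
        (N - i) + if i / ℓ < e x ∧ (i : ZMod ℓ) = -x then 1 else 0 := by
      intro i
      by_cases hi : i / ℓ < e (-(i : ZMod ℓ))
      · have : r i = ℓ * (N - i) + 1 := by simp only [r, ε, if_pos hi]
        rw [this, Finset.range_add_one, Finset.filter_insert]
        by_cases hx : (i : ZMod ℓ) = -x
        · rw [if_pos (by simp [hx]), Finset.card_insert_of_notMem (by simp), count_row, if_pos]
          rw [hx, neg_neg] at hi
          exact ⟨hi, hx⟩
        · rw [if_neg, count_row, if_neg (fun h => hx h.2)]; · rfl
          intro h
          simp only [Nat.cast_mul, CharP.cast_eq_zero, zero_mul] at h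
          exact hx (by rw [eq_neg_iff_add_eq_zero, add_comm, ← h])
      · have : r i = ℓ * (N - i) := by simp only [r, ε, if_neg hi, add_zero]
        rw [this, count_row, if_neg]; · rfl
        rintro ⟨h1, h2⟩
        rw [h2, neg_neg] at hi
        exact hi h1
    have h3 : ∑ i ∈ Finset.range N, (if i / ℓ < e x ∧ (i : ZMod ℓ) = -x then 1 else 0) = e x := by
      rw [← Finset.card_filter, ← count_row ℓ (-x) (e x)]
      congr 1
      ext i
      simp only [Finset.mem_filter, Finset.mem_range, count_row]
      rw [Nat.div_lt_iff_lt_mul hl, mul_comm]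
      have : ℓ * e x ≤ N := Nat.mul_le_mul_left _ (hQ x)
      constructor
      · rintro ⟨a, b, c⟩; exact ⟨b, c⟩
      · rintro ⟨b, c⟩; exact ⟨by omega, b, c⟩
    unfold Res
    rw [h1, Finset.sum_congr rfl (fun i _ => h2 i), Finset.sum_add_distrib, h3]
    push_cast; rfl
  exact ⟨μ, m - ((∑ i ∈ Finset.range N, (N - i) : ℕ) : ℤ), fun i => by rw [hres, he]; ring⟩

/-- Every `d ∈ ℤ^(ℤ/ℓℤ)` has a unique presentation
`d = Res_ℓ(ν) + n·δ_ℓ` with `ν` an `ℓ`-core and `n ∈ ℤ`. -/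
theorem exists_unique_core_presentation (ℓ : ℕ) [NeZero ℓ] (d : ZMod ℓ → ℤ) :
    (∃ (ν : YoungDiagram) (n : ℤ), IsCore ℓ ν ∧
      d = fun i => Res ℓ ν i + n * delta ℓ i) ∧
    (∀ (ν ν' : YoungDiagram) (n n' : ℤ), IsCore ℓ ν → IsCore ℓ ν' →
      (fun i => Res ℓ ν i + n * delta ℓ i) = (fun i => Res ℓ ν' i + n' * delta ℓ i) →
      ν = ν' ∧ n = n') := by
  constructor
  · obtain ⟨μ, n, hμ⟩ := exists_partition ℓ d
    obtain ⟨ν, n', hν, hn⟩ := exists_core ℓ _ μ rfl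
    refine ⟨ν, n' + n, hν, ?_⟩
    funext i
    rw [hμ, hn]; simp only [delta]; ring
  · intro ν ν' n n' hν hν' h
    have hC : ∀ i, Res ℓ ν i - Res ℓ ν' i = n' - n := by
      intro i
      have := congrFun h i
      simp only [delta] at this
      linarith
    have e : ν = ν' := eq_of_chi ν ν' (chi_eq ℓ ν ν' (core_packed ℓ ν hν) (core_packed ℓ ν' hν') _ hC)
    subst e
    refine ⟨rfl, ?_⟩
    have := hC 0
    linarith

end CM
end

section
/- Let ℓ ≥ 1 and θ ∈ ℂ^(ℤ/ℓℤ) with Σ_{i ∈ ℤ/ℓℤ} θ_i ≠ 0. Then any two semisimple θ-representations of the double cyclic quiver with the same dimension vector d ∈ ℕ^(ℤ/ℓℤ) are isomorphic. -/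
namespace CM

/-- A `θ`-representation of the double cyclic quiver with `ℓ` vertices and
dimension vector `d`.  The moment map relation at the vertex `i + 1` reads
`X_{i+1} ∘ Y_{i+1} - Y_i ∘ X_i = θ_{i+1} · id`; quantifying over all `i` gives the
relation at every vertex. -/
structure Rep (ℓ : ℕ) (θ : ZMod ℓ → ℂ) (d : ZMod ℓ → ℕ) where
  X : ∀ i : ZMod ℓ, (Fin (d (i + 1)) → ℂ) →ₗ[ℂ] (Fin (d i) → ℂ)
  Y : ∀ i : ZMod ℓ, (Fin (d i) → ℂ) →ₗ[ℂ] (Fin (d (i + 1)) → ℂ)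
  rel : ∀ i : ZMod ℓ,
    X (i + 1) ∘ₗ Y (i + 1) - Y i ∘ₗ X i = θ (i + 1) • LinearMap.id

/-- A subrepresentation: a family of subspaces stable under all the maps. -/
structure Subrep {ℓ : ℕ} {θ : ZMod ℓ → ℂ} {d : ZMod ℓ → ℕ} (R : Rep ℓ θ d) where
  U : ∀ i : ZMod ℓ, Submodule ℂ (Fin (d i) → ℂ)
  hX : ∀ i : ZMod ℓ, ∀ v ∈ U (i + 1), R.X i v ∈ U i
  hY : ∀ i : ZMod ℓ, ∀ v ∈ U i, R.Y i v ∈ U (i + 1)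

/-- A representation is semisimple if every subrepresentation has a complementary
subrepresentation. -/
def IsSemisimple {ℓ : ℕ} {θ : ZMod ℓ → ℂ} {d : ZMod ℓ → ℕ} (R : Rep ℓ θ d) : Prop :=
  ∀ S : Subrep R, ∃ T : Subrep R, ∀ i, IsCompl (S.U i) (T.U i)

/-- Isomorphism of two `θ`-representations with the same dimension vector. -/
def Isomorphic {ℓ : ℕ} {θ : ZMod ℓ → ℂ} {d : ZMod ℓ → ℕ} (R R' : Rep ℓ θ d) : Prop :=
  ∃ φ : ∀ i : ZMod ℓ, (Fin (d i) → ℂ) ≃ₗ[ℂ] (Fin (d i) → ℂ),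
    (∀ i : ZMod ℓ, ∀ v, φ i (R.X i v) = R'.X i (φ (i + 1) v)) ∧
    (∀ i : ZMod ℓ, ∀ v, φ (i + 1) (R.Y i v) = R'.Y i (φ i v))

open Module

section General

/-- stability of a family of subspaces -/
def Stable {ℓ : ℕ} {V : ZMod ℓ → Type} [∀ i, AddCommGroup (V i)] [∀ i, Module ℂ (V i)]
    (X : ∀ i, V (i + 1) →ₗ[ℂ] V i) (Y : ∀ i, V i →ₗ[ℂ] V (i + 1))
    (U : ∀ i, Submodule ℂ (V i)) : Prop :=
  (∀ i, ∀ v ∈ U (i + 1), X i v ∈ U i) ∧ (∀ i, ∀ v ∈ U i, Y i v ∈ U (i + 1))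

/-- semisimplicity for families of vector spaces -/
def SS {ℓ : ℕ} {V : ZMod ℓ → Type} [∀ i, AddCommGroup (V i)] [∀ i, Module ℂ (V i)]
    (X : ∀ i, V (i + 1) →ₗ[ℂ] V i) (Y : ∀ i, V i →ₗ[ℂ] V (i + 1)) : Prop :=
  ∀ U : ∀ i, Submodule ℂ (V i), Stable X Y U →
    ∃ T : ∀ i, Submodule ℂ (V i), Stable X Y T ∧ ∀ i, IsCompl (U i) (T i)

/-- relations -/
def Rel {ℓ : ℕ} (θ : ZMod ℓ → ℂ) {V : ZMod ℓ → Type} [∀ i, AddCommGroup (V i)]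
    [∀ i, Module ℂ (V i)]
    (X : ∀ i, V (i + 1) →ₗ[ℂ] V i) (Y : ∀ i, V i →ₗ[ℂ] V (i + 1)) : Prop :=
  ∀ i, ∀ v, X (i + 1) (Y (i + 1) v) - Y i (X i v) = θ (i + 1) • v

/-- morphisms -/
def IsHom {ℓ : ℕ} {V W : ZMod ℓ → Type} [∀ i, AddCommGroup (V i)] [∀ i, Module ℂ (V i)]
    [∀ i, AddCommGroup (W i)] [∀ i, Module ℂ (W i)]
    (X : ∀ i, V (i + 1) →ₗ[ℂ] V i) (Y : ∀ i, V i →ₗ[ℂ] V (i + 1))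
    (X' : ∀ i, W (i + 1) →ₗ[ℂ] W i) (Y' : ∀ i, W i →ₗ[ℂ] W (i + 1))
    (f : ∀ i, V i →ₗ[ℂ] W i) : Prop :=
  (∀ i v, f i (X i v) = X' i (f (i + 1) v)) ∧ (∀ i v, f (i + 1) (Y i v) = Y' i (f i v))

variable {ℓ : ℕ} {V W : ZMod ℓ → Type} [∀ i, AddCommGroup (V i)] [∀ i, Module ℂ (V i)]
    [∀ i, AddCommGroup (W i)] [∀ i, Module ℂ (W i)]

theorem SS.restrict {X : ∀ i, V (i + 1) →ₗ[ℂ] V i} {Y : ∀ i, V i →ₗ[ℂ] V (i + 1)}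
    (h : SS X Y) (K : ∀ i, Submodule ℂ (V i)) (hK : Stable X Y K) :
    SS (V := fun i => K i) (fun i => (X i).restrict (hK.1 i))
      (fun i => (Y i).restrict (hK.2 i)) := by
  intro U hU
  obtain ⟨T, hT, hc⟩ := h (fun i => (U i).map (K i).subtype) (by
    constructor
    · rintro i _ ⟨v, hv, rfl⟩
      exact ⟨_, hU.1 i v hv, rfl⟩
    · rintro i _ ⟨v, hv, rfl⟩
      exact ⟨_, hU.2 i v hv, rfl⟩)
  refine ⟨fun i => (T i).comap (K i).subtype, ⟨?_, ?_⟩, ?_⟩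
  · intro i v hv
    exact hT.1 i v hv
  · intro i v hv
    exact hT.2 i v hv
  · intro i
    constructor
    · rw [Submodule.disjoint_def]
      intro x hx hx'
      have := (Submodule.disjoint_def.1 (hc i).1) x.1 ⟨x, hx, rfl⟩ hx'
      exact Subtype.ext this
    · rw [codisjoint_iff, eq_top_iff]
      rintro ⟨x, hxK⟩ -
      have hx : x ∈ (U i).map (K i).subtype ⊔ T i := by
        rw [(codisjoint_iff.1 (hc i).2)]; trivial
      obtain ⟨_, ⟨u, hu, rfl⟩, t, ht, rfl⟩ := Submodule.mem_sup.1 hx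
      have htK : t ∈ K i := by
        have := (K i).sub_mem hxK u.2
        simpa using this
      exact Submodule.mem_sup.2 ⟨u, hu, ⟨t, htK⟩, ht, rfl⟩

theorem Rel.restrict {θ : ZMod ℓ → ℂ}
    {X : ∀ i, V (i + 1) →ₗ[ℂ] V i} {Y : ∀ i, V i →ₗ[ℂ] V (i + 1)}
    (h : Rel θ X Y) (K : ∀ i, Submodule ℂ (V i)) (hK : Stable X Y K) :
    Rel θ (V := fun i => K i) (fun i => (X i).restrict (hK.1 i))
      (fun i => (Y i).restrict (hK.2 i)) := by
  intro i v
  exact Subtype.ext (h i v.1)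

theorem eq_zero_of_trace {A B : Type} [AddCommGroup A] [Module ℂ A] [AddCommGroup B] [Module ℂ B]
    [FiniteDimensional ℂ A] [FiniteDimensional ℂ B] (g : B →ₗ[ℂ] A)
    (h : ∀ f : A →ₗ[ℂ] B, LinearMap.trace ℂ B (f ∘ₗ g) = 0) : g = 0 := by
  ext w
  rw [LinearMap.zero_apply, ← Module.forall_dual_apply_eq_zero_iff ℂ]
  intro ξ
  have := h (ξ.smulRight w)
  have h2 : (ξ.smulRight w) ∘ₗ g = (ξ ∘ₗ g).smulRight w := by ext; simp
  rw [h2, LinearMap.trace_smulRight] at this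
  exact this

/-- the first map of the complex -/
def dmap (X : ∀ i, V (i + 1) →ₗ[ℂ] V i) (Y : ∀ i, V i →ₗ[ℂ] V (i + 1))
    (X' : ∀ i, W (i + 1) →ₗ[ℂ] W i) (Y' : ∀ i, W i →ₗ[ℂ] W (i + 1)) :
    (∀ i, V i →ₗ[ℂ] W i) →ₗ[ℂ]
      (∀ i, (V (i + 1) →ₗ[ℂ] W i) × (V i →ₗ[ℂ] W (i + 1))) where
  toFun f i := (f i ∘ₗ X i - X' i ∘ₗ f (i + 1), f (i + 1) ∘ₗ Y i - Y' i ∘ₗ f i)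
  map_add' f g := by
    funext i
    ext v <;> simp <;> abel
  map_smul' c f := by
    funext i
    ext v <;> simp [smul_sub]

theorem dmap_injective {X : ∀ i, V (i + 1) →ₗ[ℂ] V i} {Y : ∀ i, V i →ₗ[ℂ] V (i + 1)}
    {X' : ∀ i, W (i + 1) →ₗ[ℂ] W i} {Y' : ∀ i, W i →ₗ[ℂ] W (i + 1)}
    (h : ∀ f, IsHom X Y X' Y' f → f = 0) : Function.Injective (dmap X Y X' Y') := by
  rw [injective_iff_map_eq_zero]
  intro f hf
  apply h
  constructor
  · intro i v
    have := LinearMap.congr_fun (congrArg Prod.fst (congrFun hf i)) v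
    exact sub_eq_zero.1 this
  · intro i v
    have := LinearMap.congr_fun (congrArg Prod.snd (congrFun hf i)) v
    exact sub_eq_zero.1 this

/-- the trace pairing -/
noncomputable def pairing [NeZero ℓ] (V W : ZMod ℓ → Type) [∀ i, AddCommGroup (V i)] [∀ i, Module ℂ (V i)]
    [∀ i, AddCommGroup (W i)] [∀ i, Module ℂ (W i)] :
    (∀ i, (W (i + 1) →ₗ[ℂ] V i) × (W i →ₗ[ℂ] V (i + 1))) →ₗ[ℂ]
    (∀ i, (V (i + 1) →ₗ[ℂ] W i) × (V i →ₗ[ℂ] W (i + 1))) →ₗ[ℂ] ℂ :=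
  LinearMap.mk₂ ℂ (fun q p => ∑ i, (LinearMap.trace ℂ (W i) ((p i).1 ∘ₗ (q i).2)
      - LinearMap.trace ℂ (W (i + 1)) ((p i).2 ∘ₗ (q i).1)))
    (by
      intro a b c
      rw [← Finset.sum_add_distrib]
      refine Finset.sum_congr rfl fun i _ => ?_
      simp [LinearMap.comp_add]; ring)
    (by
      intro a b c
      rw [Finset.smul_sum]
      refine Finset.sum_congr rfl fun i _ => ?_
      simp [LinearMap.comp_smul]; ring)
    (by
      intro a b c
      rw [← Finset.sum_add_distrib]
      refine Finset.sum_congr rfl fun i _ => ?_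
      simp [LinearMap.add_comp]; ring)
    (by
      intro a b c
      rw [Finset.smul_sum]
      refine Finset.sum_congr rfl fun i _ => ?_
      simp [LinearMap.smul_comp]; ring)

theorem pairing_injective [NeZero ℓ] [∀ i, FiniteDimensional ℂ (V i)]
    [∀ i, FiniteDimensional ℂ (W i)] : Function.Injective (pairing V W) := by
  rw [injective_iff_map_eq_zero]
  intro q hq
  funext i
  apply Prod.ext
  · apply eq_zero_of_trace
    intro f
    have := LinearMap.congr_fun hq (Pi.single i (0, f))
    simp only [pairing, LinearMap.mk₂_apply] at this
    rw [Finset.sum_eq_single i] at this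
    · simpa using this
    · intro j _ hj
      simp [Pi.single_eq_of_ne hj]
    · simp
  · apply eq_zero_of_trace
    intro f
    have := LinearMap.congr_fun hq (Pi.single i (f, 0))
    simp only [pairing, LinearMap.mk₂_apply] at this
    rw [Finset.sum_eq_single i] at this
    · simpa using this
    · intro j _ hj
      simp [Pi.single_eq_of_ne hj]
    · simp

theorem sum_shift [NeZero ℓ] {M : Type} [AddCommMonoid M] (g : ZMod ℓ → M) :
    ∑ i, g (i + 1) = ∑ i, g i :=
  Equiv.sum_comp (Equiv.addRight (1 : ZMod ℓ)) g

theorem pairing_dmap [NeZero ℓ] [∀ i, FiniteDimensional ℂ (V i)]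
    [∀ i, FiniteDimensional ℂ (W i)] {θ : ZMod ℓ → ℂ}
    {X : ∀ i, V (i + 1) →ₗ[ℂ] V i} {Y : ∀ i, V i →ₗ[ℂ] V (i + 1)}
    {X' : ∀ i, W (i + 1) →ₗ[ℂ] W i} {Y' : ∀ i, W i →ₗ[ℂ] W (i + 1)}
    (h : Rel θ X Y) (h' : Rel θ X' Y') (g : ∀ i, W i →ₗ[ℂ] V i) (f : ∀ i, V i →ₗ[ℂ] W i) :
    pairing V W (dmap X' Y' X Y g) (dmap X Y X' Y' f) = 0 := by
  simp only [pairing, LinearMap.mk₂_apply, dmap, LinearMap.coe_mk, AddHom.coe_mk]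
  let P : ZMod ℓ → ℂ := fun i => LinearMap.trace ℂ (W i) (f i ∘ₗ g i ∘ₗ X' i ∘ₗ Y' i)
      - LinearMap.trace ℂ (W i) (f i ∘ₗ X i ∘ₗ Y i ∘ₗ g i)
  let Q : ZMod ℓ → ℂ := fun i =>
      LinearMap.trace ℂ (W (i+1)) (f (i+1) ∘ₗ g (i+1) ∘ₗ Y' i ∘ₗ X' i)
      - LinearMap.trace ℂ (W (i+1)) (f (i+1) ∘ₗ Y i ∘ₗ X i ∘ₗ g (i+1))
  have key : ∀ i, (LinearMap.trace ℂ (W i)) ((f i ∘ₗ X i - X' i ∘ₗ f (i + 1)) ∘ₗ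
        (g (i + 1) ∘ₗ Y' i - Y i ∘ₗ g i)) -
      (LinearMap.trace ℂ (W (i + 1))) ((f (i + 1) ∘ₗ Y i - Y' i ∘ₗ f i) ∘ₗ
        (g i ∘ₗ X' i - X i ∘ₗ g (i + 1))) = P i - Q i := by
    intro i
    have e1 : LinearMap.trace ℂ (W i) (f i ∘ₗ X i ∘ₗ g (i+1) ∘ₗ Y' i) =
        LinearMap.trace ℂ (W (i+1)) (Y' i ∘ₗ f i ∘ₗ X i ∘ₗ g (i+1)) :=
      LinearMap.trace_comp_comm' (Y' i) (f i ∘ₗ X i ∘ₗ g (i+1))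
    have e2 : LinearMap.trace ℂ (W i) (X' i ∘ₗ f (i+1) ∘ₗ Y i ∘ₗ g i) =
        LinearMap.trace ℂ (W (i+1)) (f (i+1) ∘ₗ Y i ∘ₗ g i ∘ₗ X' i) :=
      LinearMap.trace_comp_comm' (f (i+1) ∘ₗ Y i ∘ₗ g i) (X' i)
    have e3 : LinearMap.trace ℂ (W i) (X' i ∘ₗ f (i+1) ∘ₗ g (i+1) ∘ₗ Y' i) =
        LinearMap.trace ℂ (W (i+1)) (f (i+1) ∘ₗ g (i+1) ∘ₗ Y' i ∘ₗ X' i) :=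
      LinearMap.trace_comp_comm' (f (i+1) ∘ₗ g (i+1) ∘ₗ Y' i) (X' i)
    have e4 : LinearMap.trace ℂ (W i) (f i ∘ₗ g i ∘ₗ X' i ∘ₗ Y' i) =
        LinearMap.trace ℂ (W (i+1)) (Y' i ∘ₗ f i ∘ₗ g i ∘ₗ X' i) :=
      LinearMap.trace_comp_comm' (Y' i) (f i ∘ₗ g i ∘ₗ X' i)
    simp only [P, Q, LinearMap.sub_comp, LinearMap.comp_sub, map_sub, LinearMap.comp_assoc]
    rw [e1, e2, e3, e4]
    ring
  rw [Finset.sum_congr rfl fun i _ => key i, Finset.sum_sub_distrib, ← sum_shift P,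
    ← Finset.sum_sub_distrib]
  refine Finset.sum_eq_zero fun i _ => ?_
  have r : X (i+1) ∘ₗ Y (i+1) = Y i ∘ₗ X i + θ (i+1) • LinearMap.id := by
    ext v; simpa using sub_eq_iff_eq_add'.1 (h i v)
  have r' : X' (i+1) ∘ₗ Y' (i+1) = Y' i ∘ₗ X' i + θ (i+1) • LinearMap.id := by
    ext v; simpa using sub_eq_iff_eq_add'.1 (h' i v)
  have r2 : X (i+1) ∘ₗ Y (i+1) ∘ₗ g (i+1) = Y i ∘ₗ X i ∘ₗ g (i+1) + θ (i+1) • g (i+1) := by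
    rw [← LinearMap.comp_assoc, r, LinearMap.add_comp, LinearMap.comp_assoc, LinearMap.smul_comp,
      LinearMap.id_comp]
  simp only [P, Q, r', r2, LinearMap.comp_add, LinearMap.comp_smul, LinearMap.comp_id, map_add]
  ring

theorem sum_theta [NeZero ℓ] [∀ i, FiniteDimensional ℂ (V i)] {θ : ZMod ℓ → ℂ}
    {X : ∀ i, V (i + 1) →ₗ[ℂ] V i} {Y : ∀ i, V i →ₗ[ℂ] V (i + 1)}
    (h : Rel θ X Y) : ∑ i, θ i * (finrank ℂ (V i) : ℂ) = 0 := by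
  rw [← sum_shift]
  have : ∀ i, θ (i+1) * (finrank ℂ (V (i+1)) : ℂ) =
      LinearMap.trace ℂ _ (X (i+1) ∘ₗ Y (i+1)) - LinearMap.trace ℂ _ (X i ∘ₗ Y i) := by
    intro i
    have r : X (i+1) ∘ₗ Y (i+1) = Y i ∘ₗ X i + θ (i+1) • LinearMap.id := by
      ext v; simpa using sub_eq_iff_eq_add'.1 (h i v)
    rw [r, LinearMap.trace_comp_comm' (Y i) (X i)]
    simp
  rw [Finset.sum_congr rfl fun i _ => this i, Finset.sum_sub_distrib,
    sum_shift (fun i => LinearMap.trace ℂ _ (X i ∘ₗ Y i)), sub_self]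

theorem exists_hom [NeZero ℓ] [∀ i, FiniteDimensional ℂ (V i)]
    [∀ i, FiniteDimensional ℂ (W i)] {θ : ZMod ℓ → ℂ} (ha : ∑ i : ZMod ℓ, θ i ≠ 0)
    {X : ∀ i, V (i + 1) →ₗ[ℂ] V i} {Y : ∀ i, V i →ₗ[ℂ] V (i + 1)}
    {X' : ∀ i, W (i + 1) →ₗ[ℂ] W i} {Y' : ∀ i, W i →ₗ[ℂ] W (i + 1)}
    (h : Rel θ X Y) (h' : Rel θ X' Y') (hd : ∀ i, finrank ℂ (V i) = finrank ℂ (W i))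
    (h1 : ∀ f, IsHom X Y X' Y' f → f = 0) (h2 : ∀ f, IsHom X' Y' X Y f → f = 0) :
    ∀ i, finrank ℂ (V i) = 0 := by
  have i1 := dmap_injective h1
  have i2 := dmap_injective h2
  have i3 := pairing_injective (V := V) (W := W)
  have s1 : Function.Surjective (dmap X Y X' Y').dualMap :=
    LinearMap.dualMap_surjective_of_injective i1
  have hle : LinearMap.range ((pairing V W) ∘ₗ dmap X' Y' X Y) ≤
      LinearMap.ker (dmap X Y X' Y').dualMap := by
    rintro _ ⟨g, rfl⟩
    rw [LinearMap.mem_ker]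
    refine LinearMap.ext fun f => ?_
    exact pairing_dmap h h' g f
  have f1 := Submodule.finrank_mono hle
  rw [LinearMap.finrank_range_of_inj (f := (pairing V W) ∘ₗ dmap X' Y' X Y)
    (Function.Injective.comp (g := pairing V W) i3 i2)] at f1
  have f2 := LinearMap.finrank_range_add_finrank_ker (dmap X Y X' Y').dualMap
  rw [LinearMap.range_eq_top.2 s1, finrank_top, Subspace.dual_finrank_eq,
    Subspace.dual_finrank_eq] at f2
  have f12 := (Nat.add_le_add_left f1 _).trans f2.le
  simp only [Module.finrank_pi_fintype, Module.finrank_prod, Module.finrank_linearMap, ← hd] at f12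
  have f3 : ∑ i, finrank ℂ (V i) * finrank ℂ (V i) + ∑ i, finrank ℂ (V i) * finrank ℂ (V i) ≤
    ∑ i, (finrank ℂ (V (i+1)) * finrank ℂ (V i) + finrank ℂ (V i) * finrank ℂ (V (i+1))) := f12
  have f4 : ∑ i, ((finrank ℂ (V (i+1)) : ℤ) - finrank ℂ (V i))^2 ≤ 0 := by
    have e : ∀ i, ((finrank ℂ (V (i+1)) : ℤ) - finrank ℂ (V i))^2 =
      (finrank ℂ (V (i+1)) * finrank ℂ (V (i+1)) : ℤ) + finrank ℂ (V i) * finrank ℂ (V i)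
      - (finrank ℂ (V (i+1)) * finrank ℂ (V i) + finrank ℂ (V i) * finrank ℂ (V (i+1))) := by
      intro i; ring
    rw [Finset.sum_congr rfl fun i _ => e i, Finset.sum_sub_distrib, Finset.sum_add_distrib,
      sum_shift (fun i => (finrank ℂ (V i) * finrank ℂ (V i) : ℤ))]
    zify at f3
    linarith
  have f5 : ∀ i, finrank ℂ (V (i+1)) = finrank ℂ (V i) := by
    intro i
    have := (Finset.sum_eq_zero_iff_of_nonneg (fun i _ => sq_nonneg _)).1
      (le_antisymm f4 (Finset.sum_nonneg fun i _ => sq_nonneg _)) i (Finset.mem_univ _)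
    have := pow_eq_zero_iff (two_ne_zero) |>.1 this
    omega
  have f6 : ∀ n : ℕ, finrank ℂ (V (n : ZMod ℓ)) = finrank ℂ (V 0) := by
    intro n
    induction n with
    | zero => rw [Nat.cast_zero]
    | succ n ih => rw [Nat.cast_succ, f5, ih]
  have f7 : ∀ i, finrank ℂ (V i) = finrank ℂ (V 0) := by
    intro i
    rw [← f6 i.val, ZMod.natCast_zmod_val]
  have f8 := sum_theta h
  rw [Finset.sum_congr rfl fun i _ => by rw [f7 i], ← Finset.sum_mul] at f8
  intro i
  rw [f7]
  exact_mod_cast (mul_eq_zero.1 f8).resolve_left ha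

/-- existence of an isomorphism -/
def Iso (X : ∀ i, V (i + 1) →ₗ[ℂ] V i) (Y : ∀ i, V i →ₗ[ℂ] V (i + 1))
    (X' : ∀ i, W (i + 1) →ₗ[ℂ] W i) (Y' : ∀ i, W i →ₗ[ℂ] W (i + 1)) : Prop :=
  ∃ φ : ∀ i, V i ≃ₗ[ℂ] W i, IsHom X Y X' Y' (fun i => (φ i : V i →ₗ[ℂ] W i))

theorem Iso.symm {X : ∀ i, V (i + 1) →ₗ[ℂ] V i} {Y : ∀ i, V i →ₗ[ℂ] V (i + 1)}
    {X' : ∀ i, W (i + 1) →ₗ[ℂ] W i} {Y' : ∀ i, W i →ₗ[ℂ] W (i + 1)}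
    (h : Iso X Y X' Y') : Iso X' Y' X Y := by
  obtain ⟨φ, h1, h2⟩ := h
  refine ⟨fun i => (φ i).symm, fun i v => ?_, fun i v => ?_⟩
  · have := h1 i ((φ (i+1)).symm v)
    simp only [LinearEquiv.coe_coe, LinearEquiv.apply_symm_apply] at this ⊢
    rw [← this, LinearEquiv.symm_apply_apply]
  · have := h2 i ((φ i).symm v)
    simp only [LinearEquiv.coe_coe, LinearEquiv.apply_symm_apply] at this ⊢
    rw [← this, LinearEquiv.symm_apply_apply]

end General

/-- the main claim below a given total dimension -/
def Claim (ℓ : ℕ) [NeZero ℓ] (θ : ZMod ℓ → ℂ) (n : ℕ) : Prop :=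
  ∀ (V W : ZMod ℓ → Type) [∀ i, AddCommGroup (V i)] [∀ i, Module ℂ (V i)]
    [∀ i, AddCommGroup (W i)] [∀ i, Module ℂ (W i)] [∀ i, FiniteDimensional ℂ (V i)]
    [∀ i, FiniteDimensional ℂ (W i)]
    (X : ∀ i, V (i + 1) →ₗ[ℂ] V i) (Y : ∀ i, V i →ₗ[ℂ] V (i + 1))
    (X' : ∀ i, W (i + 1) →ₗ[ℂ] W i) (Y' : ∀ i, W i →ₗ[ℂ] W (i + 1)),
    Rel θ X Y → Rel θ X' Y' → SS X Y → SS X' Y' →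
    (∀ i, finrank ℂ (V i) = finrank ℂ (W i)) → ∑ i, finrank ℂ (V i) < n → Iso X Y X' Y'

theorem step {ℓ : ℕ} [NeZero ℓ] {θ : ZMod ℓ → ℂ} {n : ℕ} (ih : Claim ℓ θ n)
    {V W : ZMod ℓ → Type} [∀ i, AddCommGroup (V i)] [∀ i, Module ℂ (V i)]
    [∀ i, AddCommGroup (W i)] [∀ i, Module ℂ (W i)] [∀ i, FiniteDimensional ℂ (V i)]
    [∀ i, FiniteDimensional ℂ (W i)]
    {X : ∀ i, V (i + 1) →ₗ[ℂ] V i} {Y : ∀ i, V i →ₗ[ℂ] V (i + 1)}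
    {X' : ∀ i, W (i + 1) →ₗ[ℂ] W i} {Y' : ∀ i, W i →ₗ[ℂ] W (i + 1)}
    (h : Rel θ X Y) (h' : Rel θ X' Y') (hs : SS X Y) (hs' : SS X' Y')
    (hd : ∀ i, finrank ℂ (V i) = finrank ℂ (W i)) (hn : ∑ i, finrank ℂ (V i) < n + 1)
    (f : ∀ i, V i →ₗ[ℂ] W i) (hf : IsHom X Y X' Y' f) (hf0 : f ≠ 0) : Iso X Y X' Y' := by
  have hK : Stable X Y (fun i => LinearMap.ker (f i)) := by
    constructor
    · intro i v hv
      rw [LinearMap.mem_ker] at hv ⊢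
      rw [hf.1, hv, map_zero]
    · intro i v hv
      rw [LinearMap.mem_ker] at hv ⊢
      rw [hf.2, hv, map_zero]
  have hI : Stable X' Y' (fun i => LinearMap.range (f i)) := by
    constructor
    · rintro i _ ⟨v, rfl⟩
      exact ⟨_, hf.1 i v⟩
    · rintro i _ ⟨v, rfl⟩
      exact ⟨_, hf.2 i v⟩
  obtain ⟨C, hC, hKC⟩ := hs _ hK
  obtain ⟨D, hD, hID⟩ := hs' _ hI
  have hdim : ∀ i, finrank ℂ (LinearMap.ker (f i)) = finrank ℂ (D i) := by
    intro i
    have e1 := LinearMap.finrank_range_add_finrank_ker (f i)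
    have e2 := Submodule.finrank_add_eq_of_isCompl (hID i)
    have := hd i
    omega
  have hlt : ∑ i, finrank ℂ (LinearMap.ker (f i)) < n := by
    refine lt_of_lt_of_le ?_ (Nat.lt_succ_iff.1 hn)
    obtain ⟨j, hj⟩ := Function.ne_iff.1 hf0
    refine Finset.sum_lt_sum (fun i _ => Submodule.finrank_le _) ⟨j, Finset.mem_univ _, ?_⟩
    apply Submodule.finrank_lt
    intro htop
    exact hj (LinearMap.ker_eq_top.1 htop)
  obtain ⟨φ, hφ⟩ := ih (fun i => LinearMap.ker (f i)) (fun i => D i) _ _ _ _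
    (h.restrict _ hK) (h'.restrict _ hD) (hs.restrict _ hK) (hs'.restrict _ hD) hdim hlt
  let π : ∀ i, V i →ₗ[ℂ] LinearMap.ker (f i) := fun i =>
    (LinearMap.ker (f i)).projectionOnto (C i) (hKC i)
  have dec : ∀ i v, ∃ k : LinearMap.ker (f i), ∃ c ∈ C i, v = k.1 + c := by
    intro i v
    have hx : v ∈ LinearMap.ker (f i) ⊔ C i := by
      rw [(codisjoint_iff.1 (hKC i).2)]; trivial
    obtain ⟨k, hk, c, hc, e⟩ := Submodule.mem_sup.1 hx
    exact ⟨⟨k, hk⟩, c, hc, e.symm⟩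
  have hπ : ∀ i (k : LinearMap.ker (f i)) c, c ∈ C i → π i (k.1 + c) = k := by
    intro i k c hc
    have e1 : π i k.1 = k := Submodule.projectionOnto_apply_left (hKC i) k
    have e2 : π i c = 0 := Submodule.projectionOnto_apply_right (hKC i) ⟨c, hc⟩
    rw [map_add, e1, e2, add_zero]
  have hπX : ∀ i v, π i (X i v) = (X i).restrict (hK.1 i) (π (i+1) v) := by
    intro i v
    obtain ⟨k, c, hc, rfl⟩ := dec _ v
    rw [hπ _ _ _ hc, map_add]
    exact hπ i ((X i).restrict (hK.1 i) k) _ (hC.1 i c hc)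
  have hπY : ∀ i v, π (i+1) (Y i v) = (Y i).restrict (hK.2 i) (π i v) := by
    intro i v
    obtain ⟨k, c, hc, rfl⟩ := dec _ v
    rw [hπ _ _ _ hc, map_add]
    exact hπ (i+1) ((Y i).restrict (hK.2 i) k) _ (hC.2 i c hc)
  let ψ : ∀ i, V i →ₗ[ℂ] W i := fun i =>
    (D i).subtype ∘ₗ (φ i : LinearMap.ker (f i) →ₗ[ℂ] D i) ∘ₗ π i + f i
  have hψ : ∀ i v, ψ i v = (φ i (π i v)).1 + f i v := fun i v => rfl
  have hinj : ∀ i, Function.Injective (ψ i) := by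
    intro i
    rw [injective_iff_map_eq_zero]
    intro v hv
    rw [hψ] at hv
    have h1 : f i v ∈ D i := by
      rw [eq_neg_of_add_eq_zero_right hv]
      exact (D i).neg_mem (φ i (π i v)).2
    have h2 : f i v = 0 := Submodule.disjoint_def.1 (hID i).1 _ ⟨v, rfl⟩ h1
    rw [h2, add_zero] at hv
    have h3 : π i v = 0 := (φ i).map_eq_zero_iff.1 (Subtype.ext hv)
    have h4 := hπ i ⟨v, h2⟩ 0 (C i).zero_mem
    rw [add_zero, h3] at h4
    exact (congrArg Subtype.val h4).symm
  refine ⟨fun i => LinearEquiv.ofInjectiveOfFinrankEq (ψ i) (hinj i) (hd i), ?_, ?_⟩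
  · intro i v
    change ψ i (X i v) = X' i (ψ (i+1) v)
    rw [hψ, hψ, map_add, hf.1, hπX]
    congr 1
    exact congrArg Subtype.val (hφ.1 i (π (i+1) v))
  · intro i v
    change ψ (i+1) (Y i v) = Y' i (ψ i v)
    rw [hψ, hψ, map_add, hf.2, hπY]
    congr 1
    exact congrArg Subtype.val (hφ.2 i (π i v))

theorem claim {ℓ : ℕ} [NeZero ℓ] {θ : ZMod ℓ → ℂ} (ha : ∑ i : ZMod ℓ, θ i ≠ 0) (n : ℕ) :
    Claim ℓ θ n := by
  induction n with
  | zero =>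
    intro V W _ _ _ _ _ _ X Y X' Y' _ _ _ _ _ hn
    exact absurd hn (Nat.not_lt_zero _)
  | succ n ih =>
    intro V W _ _ _ _ _ _ X Y X' Y' h h' hs hs' hd hn
    by_cases h1 : ∀ f, IsHom X Y X' Y' f → f = 0
    · by_cases h2 : ∀ f, IsHom X' Y' X Y f → f = 0
      · have h0 := exists_hom ha h h' hd h1 h2
        have hW : ∀ i, Subsingleton (W i) := fun i =>
          Module.finrank_zero_iff.1 ((hd i).symm.trans (h0 i))
        exact ⟨fun i => LinearEquiv.ofFinrankEq _ _ (hd i), fun i v => Subsingleton.elim _ _,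
          fun i v => Subsingleton.elim _ _⟩
      · push Not at h2
        obtain ⟨f, hf, hf0⟩ := h2
        refine (step ih h' h hs' hs (fun i => (hd i).symm) ?_ f hf hf0).symm
        simpa only [← hd] using hn
    · push Not at h1
      obtain ⟨f, hf, hf0⟩ := h1
      exact step ih h h' hs hs' hd hn f hf hf0

theorem Rep.rel' {ℓ : ℕ} {θ : ZMod ℓ → ℂ} {d : ZMod ℓ → ℕ} (R : Rep ℓ θ d) :
    Rel θ (V := fun i => Fin (d i) → ℂ) R.X R.Y := fun i v => LinearMap.congr_fun (R.rel i) v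

theorem IsSemisimple.ss {ℓ : ℕ} {θ : ZMod ℓ → ℂ} {d : ZMod ℓ → ℕ} {R : Rep ℓ θ d}
    (h : IsSemisimple R) : SS (V := fun i => Fin (d i) → ℂ) R.X R.Y := by
  intro U hU
  obtain ⟨T, hT⟩ := h ⟨U, hU.1, hU.2⟩
  exact ⟨T.U, ⟨T.hX, T.hY⟩, hT⟩

/-- If `∑ θ_i ≠ 0`, any two semisimple `θ`-representations with the
same dimension vector are isomorphic. -/
theorem semisimple_unique (ℓ : ℕ) [NeZero ℓ] (θ : ZMod ℓ → ℂ)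
    (ha : ∑ i : ZMod ℓ, θ i ≠ 0) (d : ZMod ℓ → ℕ) (R R' : Rep ℓ θ d)
    (hR : IsSemisimple R) (hR' : IsSemisimple R') : Isomorphic R R' := by
  obtain ⟨φ, h1, h2⟩ := claim ha _ (fun i => Fin (d i) → ℂ) (fun i => Fin (d i) → ℂ)
    R.X R.Y R'.X R'.Y R.rel' R'.rel' hR.ss hR'.ss (fun _ => rfl) (Nat.lt_succ_self _)
  exact ⟨φ, h1, h2⟩

end CM
end

section
/- Let ℓ ≥ 2, J ⊆ ℤ/ℓℤ, and let θ ∈ ℂ^(ℤ/ℓℤ) be J-standard with Σ_{i ∈ ℤ/ℓℤ} θ_i ≠ 0. Then a vector d ∈ ℕ^(ℤ/ℓℤ) is the dimension vector of a simple θ-representation of the double cyclic quiver if and only if d = e_i for some i ∈ J, where e_i denotes the i-th standard basis vector of ℤ^(ℤ/ℓℤ). -/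
namespace CM

/-- The (non-linear) action of the simple reflection `s_j` on `ℤ^(ℤ/ℓℤ)`. -/
def sInt (ℓ : ℕ) (j : ZMod ℓ) (d : ZMod ℓ → ℤ) : ZMod ℓ → ℤ := fun i =>
  if i = j then (if j = 0 then 1 else 0) + d (j + 1) + d (j - 1) - d j else d i

/-- The linear action of the simple reflection `s_j` on `ℂ^(ℤ/ℓℤ)`.
For `i ≠ j` the coefficient of `θ j` is the number of arrows between `i` and `j`
(which is `2` when `ℓ = 2`). -/
def sC (ℓ : ℕ) (j : ZMod ℓ) (θ : ZMod ℓ → ℂ) : ZMod ℓ → ℂ := fun i =>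
  if i = j then -θ j
  else θ i + ((if i = j - 1 then 1 else 0) + (if i = j + 1 then 1 else 0) : ℂ) * θ j

lemma sC_sC (ℓ : ℕ) (j : ZMod ℓ) (θ : ZMod ℓ → ℂ) : sC ℓ j (sC ℓ j θ) = θ := by
  funext i
  by_cases h : i = j
  · subst h; simp [sC]
  · simp [sC, h]

/-- `s_j` as a bijection of `ℂ^(ℤ/ℓℤ)`. -/
def sPerm (ℓ : ℕ) (j : ZMod ℓ) : Equiv.Perm (ZMod ℓ → ℂ) :=
  ⟨sC ℓ j, sC ℓ j, fun θ => sC_sC ℓ j θ, fun θ => sC_sC ℓ j θ⟩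

/-- The group generated by the operators `s_j`, `j ∈ ℤ/ℓℤ`. -/
def Wgrp (ℓ : ℕ) : Subgroup (Equiv.Perm (ZMod ℓ → ℂ)) :=
  Subgroup.closure (Set.range (sPerm ℓ))

/-- The subgroup generated by the operators `s_j`, `j ∈ J`. -/
def WJ (ℓ : ℕ) (J : Set (ZMod ℓ)) : Subgroup (Equiv.Perm (ZMod ℓ → ℂ)) :=
  Subgroup.closure (sPerm ℓ '' J)

/-- `θ` is `J`-standard if its stabilizer in `W` is exactly `W_J`. -/
def JStandard (ℓ : ℕ) (J : Set (ZMod ℓ)) (θ : ZMod ℓ → ℂ) : Prop :=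
  ∀ w ∈ Wgrp ℓ, ((w : (ZMod ℓ → ℂ) → (ZMod ℓ → ℂ)) θ = θ ↔ w ∈ WJ ℓ J)

/-- A representation is simple if `d ≠ 0` and its only subrepresentations are `0` and itself. -/
def IsSimple {ℓ : ℕ} {θ : ZMod ℓ → ℂ} {d : ZMod ℓ → ℕ} (R : Rep ℓ θ d) : Prop :=
  (∃ i, d i ≠ 0) ∧ ∀ S : Subrep R, (∀ i, S.U i = ⊥) ∨ (∀ i, S.U i = ⊤)

lemma sC_eq (ℓ : ℕ) (hℓ : 2 ≤ ℓ) (j : ZMod ℓ) (φ : ZMod ℓ → ℂ) (i : ZMod ℓ) :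
    sC ℓ j φ i = φ i + ((if i = j - 1 then 1 else 0) + (if i = j + 1 then 1 else 0)
      - 2 * (if i = j then 1 else 0)) * φ j := by
  have : Fact (1 < ℓ) := ⟨hℓ⟩
  by_cases h : i = j
  · subst h
    have h1 : i ≠ i - 1 := by
      intro h
      have := congrArg (fun x => i - x) h
      simp at this
    have h2 : i ≠ i + 1 := by simp
    simp only [sC, if_true, if_neg h1, if_neg h2]
    ring
  · simp [sC, h]

lemma sC_fix_iff (ℓ : ℕ) (j : ZMod ℓ) (φ : ZMod ℓ → ℂ) :
    sC ℓ j φ = φ ↔ φ j = 0 := by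
  constructor
  · intro h
    have := congrFun h j
    simp only [sC, if_true] at this
    have h2 : (2 : ℂ) * φ j = 0 := by linear_combination -this
    simpa using h2
  · intro h
    funext i
    by_cases hi : i = j
    · subst hi; simp [sC, h]
    · simp [sC, hi, h]

/-- Sum of `φ` over the arc `i, i-1, ..., i-n+1`. -/
def arc (ℓ : ℕ) (i : ZMod ℓ) (n : ℕ) (φ : ZMod ℓ → ℂ) : ℂ :=
  ∑ m ∈ Finset.range n, φ (i - m)

lemma arc_sC (ℓ : ℕ) (hℓ : 2 ≤ ℓ) (i : ZMod ℓ) (φ : ZMod ℓ → ℂ) (N : ℕ) :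
    arc ℓ (i - 1) N (sC ℓ i φ) = arc ℓ i (N + 1) φ +
      ((if ((N + 1 : ℕ) : ZMod ℓ) = 0 then 1 else 0)
        - (if ((N : ℕ) : ZMod ℓ) = 0 then 1 else 0)) * φ i := by
  have : Fact (1 < ℓ) := ⟨hℓ⟩
  induction N with
  | zero => simp [arc]
  | succ N ih =>
    have e1 : ∀ ψ : ZMod ℓ → ℂ, ∀ k n, arc ℓ k (n + 1) ψ = arc ℓ k n ψ + ψ (k - n) := by
      intro ψ k n; simp [arc, Finset.sum_range_succ]
    rw [e1, ih, e1 φ i (N + 1), sC_eq ℓ hℓ]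
    have a0 : i - 1 - (N : ZMod ℓ) = i - ((N + 1 : ℕ) : ZMod ℓ) := by push_cast; ring
    have a1 : (i - 1 - (N : ZMod ℓ) = i - 1) ↔ ((N : ℕ) : ZMod ℓ) = 0 := by simp
    have a2 : (i - 1 - (N : ZMod ℓ) = i + 1) ↔ ((N + 1 + 1 : ℕ) : ZMod ℓ) = 0 := by
      push_cast
      constructor
      · intro h; linear_combination -h
      · intro h; linear_combination -h
    have a3 : (i - 1 - (N : ZMod ℓ) = i) ↔ ((N + 1 : ℕ) : ZMod ℓ) = 0 := by
      push_cast
      constructor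
      · intro h; linear_combination -h
      · intro h; linear_combination -h
    simp only [a1, a2, a3]
    rw [a0]
    ring

lemma exists_reflection (ℓ : ℕ) (hℓ : 2 ≤ ℓ) (n : ℕ) : ¬ ℓ ∣ n → ∀ i : ZMod ℓ,
    ∃ w ∈ Wgrp ℓ, ∀ φ : ZMod ℓ → ℂ, w φ = φ ↔ arc ℓ i n φ = 0 := by
  induction n using Nat.strong_induction_on with
  | _ n ih =>
  intro hn i
  have hs : sPerm ℓ i ∈ Wgrp ℓ := Subgroup.subset_closure ⟨i, rfl⟩
  have key : ∀ k, k < n → ¬ ℓ ∣ k →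
      (∀ φ, arc ℓ (i - 1) k (sC ℓ i φ) = arc ℓ i n φ) →
      ∃ w ∈ Wgrp ℓ, ∀ φ : ZMod ℓ → ℂ, w φ = φ ↔ arc ℓ i n φ = 0 := by
    intro k hk hk2 hφ
    obtain ⟨w, hw, h⟩ := ih k hk hk2 (i - 1)
    refine ⟨sPerm ℓ i * w * sPerm ℓ i, mul_mem (mul_mem hs hw) hs, fun φ => ?_⟩
    rw [← hφ, ← h]
    change sC ℓ i (w (sC ℓ i φ)) = φ ↔ _
    constructor
    · intro h1
      have := congrArg (sC ℓ i) h1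
      rwa [sC_sC] at this
    · intro h1
      rw [h1, sC_sC]
  obtain _ | n := n
  · simp at hn
  have hn0 : ((n + 1 : ℕ) : ZMod ℓ) ≠ 0 := by
    rwa [Ne, ZMod.natCast_eq_zero_iff]
  by_cases hd : ℓ ∣ n
  · obtain _ | n := n
    · refine ⟨sPerm ℓ i, hs, fun φ => ?_⟩
      change sC ℓ i φ = φ ↔ _
      rw [sC_fix_iff]; simp [arc]
    · have hd' : ((n + 1 : ℕ) : ZMod ℓ) = 0 := by rwa [ZMod.natCast_eq_zero_iff]
      refine key n (by omega) ?_ ?_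
      · intro h
        have := (Nat.dvd_sub hd h)
        simp at this
        omega
      · intro φ
        have h1 := arc_sC ℓ hℓ i φ (n + 1)
        rw [if_neg hn0, if_pos hd'] at h1
        have h2 : arc ℓ (i - 1) (n + 1) (sC ℓ i φ)
            = arc ℓ (i - 1) n (sC ℓ i φ) + sC ℓ i φ (i - 1 - n) := by
          simp [arc, Finset.sum_range_succ]
        have h3 : i - 1 - (n : ZMod ℓ) = i := by
          push_cast at hd'
          linear_combination -hd'
        have h4 : sC ℓ i φ i = - φ i := by simp [sC]
        rw [h3, h4] at h2
        linear_combination h1 - h2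
  · refine key n (by omega) hd fun φ => ?_
    have h1 := arc_sC ℓ hℓ i φ n
    have hd' : ((n : ℕ) : ZMod ℓ) ≠ 0 := by rwa [Ne, ZMod.natCast_eq_zero_iff]
    rw [if_neg hn0, if_neg hd'] at h1
    simpa using h1

lemma WJ_fix (ℓ : ℕ) (J : Set (ZMod ℓ)) (φ : ZMod ℓ → ℂ) (hφ : ∀ j ∈ J, φ j = 0)
    (w : Equiv.Perm (ZMod ℓ → ℂ)) (hw : w ∈ WJ ℓ J) : w φ = φ := by
  induction hw using Subgroup.closure_induction with
  | mem x hx =>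
    obtain ⟨j, hj, rfl⟩ := hx
    exact (sC_fix_iff ℓ j φ).2 (hφ j hj)
  | one => rfl
  | mul x y _ _ hx hy => rw [Equiv.Perm.mul_apply, hy, hx]
  | inv x _ hx => rw [Equiv.Perm.inv_eq_iff_eq, hx]

lemma std_zero (ℓ : ℕ) (J : Set (ZMod ℓ)) (θ : ZMod ℓ → ℂ) (hst : JStandard ℓ J θ)
    (j : ZMod ℓ) (hj : j ∈ J) : θ j = 0 := by
  have := (hst (sPerm ℓ j) (Subgroup.subset_closure ⟨j, rfl⟩)).2
    (Subgroup.subset_closure ⟨j, hj, rfl⟩)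
  exact (sC_fix_iff ℓ j θ).1 this

lemma std_mem (ℓ : ℕ) (hℓ : 2 ≤ ℓ) (J : Set (ZMod ℓ)) (θ : ZMod ℓ → ℂ)
    (hst : JStandard ℓ J θ) (i : ZMod ℓ) (n : ℕ) (hn : ¬ ℓ ∣ n) (h : arc ℓ i n θ = 0) :
    i ∈ J := by
  by_contra hi
  obtain ⟨w, hw, hφ⟩ := exists_reflection ℓ hℓ n hn i
  have hwJ : w ∈ WJ ℓ J := (hst w hw).1 ((hφ θ).2 h)
  have h1 := WJ_fix ℓ J (fun a => if a = i then 1 else 0)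
    (fun j hj => if_neg (fun e : j = i => hi (e ▸ hj))) w hwJ
  rw [hφ] at h1
  obtain _ | n := n
  · simp at hn
  unfold arc at h1
  rw [Finset.sum_boole, Nat.cast_eq_zero, Finset.card_eq_zero] at h1
  have : 0 ∈ (Finset.range (n + 1)).filter (fun m : ℕ => i - (m : ZMod ℓ) = i) := by simp
  rw [h1] at this
  simp at this

lemma sum_range_zmod (ℓ : ℕ) [NeZero ℓ] (f : ZMod ℓ → ℂ) :
    ∑ m ∈ Finset.range ℓ, f m = ∑ i, f i := by
  refine Finset.sum_bij (fun (m : ℕ) _ => (m : ZMod ℓ)) (by simp) ?_ ?_ (by simp)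
  · intro a ha b hb h
    simp only [Finset.mem_range] at ha hb
    have := congrArg ZMod.val h
    rwa [ZMod.val_cast_of_lt ha, ZMod.val_cast_of_lt hb] at this
  · intro b _
    exact ⟨b.val, by simpa using ZMod.val_lt b, by simp⟩

lemma sum_range_mul (ℓ : ℕ) [NeZero ℓ] (f : ZMod ℓ → ℂ) (k : ℕ) :
    ∑ m ∈ Finset.range (ℓ * k), f m = k * ∑ i, f i := by
  induction k with
  | zero => simp
  | succ k ih =>
    rw [Nat.mul_succ, Finset.sum_range_add, ih, ← sum_range_zmod]
    simp
    ring

lemma arc_mul (ℓ : ℕ) [NeZero ℓ] (f : ZMod ℓ → ℂ) (i : ZMod ℓ) (k : ℕ) :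
    arc ℓ i (ℓ * k) f = k * ∑ i, f i := by
  unfold arc
  rw [sum_range_mul ℓ (fun m => f (i - m))]
  exact congrArg _ (Equiv.sum_comp (Equiv.subLeft i) f)

lemma up_mul (ℓ : ℕ) [NeZero ℓ] (f : ZMod ℓ → ℂ) (i : ZMod ℓ) (k : ℕ) :
    ∑ m ∈ Finset.range (ℓ * k), f (i + m) = k * ∑ i, f i := by
  rw [sum_range_mul ℓ (fun m => f (i + m))]
  exact congrArg _ (Equiv.sum_comp (Equiv.addLeft i) f)

/-- An endomorphism of a finite-dimensional space has only finitely many eigenvalues. -/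
lemma exists_zero_of_eigen {V : Type*} [AddCommGroup V] [Module ℂ V] [FiniteDimensional ℂ V]
    (A : V →ₗ[ℂ] V) (v : ℕ → V) (c : ℕ → ℂ) (hc : Function.Injective c)
    (h : ∀ k, A (v k) = c k • v k) : ∃ k, v k = 0 := by
  by_contra! hv
  have h1 : ∀ k, Module.End.HasEigenvalue A (c k) := fun k =>
    Module.End.hasEigenvalue_of_hasEigenvector
      (Module.End.hasEigenvector_iff.2 ⟨Module.End.mem_eigenspace_iff.2 (h k), hv k⟩)
  have hf : (Set.range c).Finite :=
    (Module.End.finite_hasEigenvalue A).subset (by rintro _ ⟨k, rfl⟩; exact h1 k)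
  exact Set.infinite_range_of_injective hc hf

section total

variable {ℓ : ℕ} {θ : ZMod ℓ → ℂ} {d : ZMod ℓ → ℕ} (R : Rep ℓ θ d)

/-- The map `Y_i` with target relabelled. -/
def Yh (i j : ZMod ℓ) (h : j = i + 1) : (Fin (d i) → ℂ) →ₗ[ℂ] (Fin (d j) → ℂ) := by
  subst h; exact R.Y i

/-- The total space. -/
abbrev Tot (d : ZMod ℓ → ℕ) : Type := ∀ i : ZMod ℓ, Fin (d i) → ℂ

/-- The total `X`. -/
def TX : Tot d →ₗ[ℂ] Tot d := LinearMap.pi fun i => R.X i ∘ₗ LinearMap.proj (i + 1)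

/-- The total `Y`. -/
def TY : Tot d →ₗ[ℂ] Tot d :=
  LinearMap.pi fun i => Yh R (i - 1) i (by ring) ∘ₗ LinearMap.proj (i - 1)

lemma TX_apply (v : Tot d) (i : ZMod ℓ) : TX R v i = R.X i (v (i + 1)) := rfl

lemma TY_apply' (v : Tot d) (i j k : ZMod ℓ) (hk : k = i) (h : j = i + 1) (h' : j = k + 1) :
    Yh R k j h' (v k) = Yh R i j h (v i) := by
  subst hk; rfl

lemma TY_apply (v : Tot d) (i : ZMod ℓ) : TY R v (i + 1) = R.Y i (v i) :=
  TY_apply' R v i (i + 1) (i + 1 - 1) (by ring) rfl (by ring)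

lemma T_rel (v : Tot d) (i : ZMod ℓ) :
    TX R (TY R v) i = TY R (TX R v) i + θ i • v i := by
  obtain ⟨j, rfl⟩ : ∃ j, i = j + 1 := ⟨i - 1, by ring⟩
  have := LinearMap.congr_fun (R.rel j) (v (j + 1))
  simp only [LinearMap.sub_apply, LinearMap.comp_apply, LinearMap.smul_apply,
    LinearMap.id_apply] at this
  rw [TX_apply, TY_apply, TY_apply, TX_apply, ← this]
  abel

/-- A stable subspace of the total space gives a subrepresentation. -/
def subOf (M : Submodule ℂ (Tot d)) (hX : ∀ v ∈ M, TX R v ∈ M) (hY : ∀ v ∈ M, TY R v ∈ M) :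
    Subrep R where
  U i := M.map (LinearMap.proj i)
  hX i v hv := by
    obtain ⟨w, hw, rfl⟩ := hv
    exact ⟨TX R w, hX w hw, rfl⟩
  hY i v hv := by
    obtain ⟨w, hw, rfl⟩ := hv
    exact ⟨TY R w, hY w hw, TY_apply R w i⟩

/-- Vectors concentrated in degree `a`. -/
def Hom (a : ZMod ℓ) (v : Tot d) : Prop := ∀ i, i ≠ a → v i = 0

lemma Hom_TX {a b : ZMod ℓ} (hab : a = b + 1) {v : Tot d} (hv : Hom a v) : Hom b (TX R v) := by
  intro i hi
  rw [TX_apply, hv (i + 1) (by rw [hab]; simpa using hi), map_zero]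

lemma Hom_TY {a b : ZMod ℓ} (hab : b = a + 1) {v : Tot d} (hv : Hom a v) : Hom b (TY R v) := by
  intro i hi
  obtain ⟨j, rfl⟩ : ∃ j, i = j + 1 := ⟨i - 1, by ring⟩
  rw [TY_apply, hv j (by rintro rfl; exact hi hab.symm), map_zero]

lemma Hom_rel {a : ZMod ℓ} {v : Tot d} (hv : Hom a v) :
    TX R (TY R v) = TY R (TX R v) + θ a • v := by
  funext i
  rw [T_rel]
  by_cases h : i = a
  · subst h; rfl
  · simp [hv i h]

lemma Hom_eq {a : ZMod ℓ} {v : Tot d} (hv : Hom a v) (h : v a = 0) : v = 0 := by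
  funext i
  by_cases hi : i = a
  · subst hi; exact h
  · exact hv i hi

/-- Existence of a homogeneous vector killed by `Y`. -/
lemma exists_top [NeZero ℓ] (ha : ∑ i : ZMod ℓ, θ i ≠ 0) (a : ZMod ℓ) (hda : d a ≠ 0) :
    ∃ b, ∃ w : Tot d, Hom b w ∧ w ≠ 0 ∧ TY R w = 0 := by
  have : NeZero (d a) := ⟨hda⟩
  obtain ⟨c, hc⟩ := Module.End.exists_eigenvalue (K := ℂ) (R.X a ∘ₗ R.Y a : Module.End ℂ _)
  obtain ⟨v0, hv0⟩ := hc.exists_hasEigenvector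
  have hv0' := hv0.apply_eq_smul
  have hv00 := hv0.2
  let v : Tot d := Pi.single a v0
  have hv : Hom a v := fun i hi => Pi.single_eq_of_ne hi _
  have hva : v a = v0 := Pi.single_eq_same _ _
  have hvne : v ≠ 0 := fun h => hv00 (by rw [← hva, h]; rfl)
  let y : ℕ → Tot d := fun k => (TY R)^[k] v
  have hys : ∀ k, y (k + 1) = TY R (y k) := fun k => Function.iterate_succ_apply' _ _ _
  have hyH : ∀ k : ℕ, Hom (a + (k : ZMod ℓ)) (y k) := by
    intro k
    induction k with
    | zero => simpa [y] using hv
    | succ k ih =>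
      rw [hys]
      exact Hom_TY R (by push_cast; ring) ih
  have hyE : ∀ k : ℕ, TX R (TY R (y k))
      = (c + ∑ m ∈ Finset.range k, θ (a + 1 + m)) • y k := by
    intro k
    induction k with
    | zero =>
      have h0 : Hom a (TX R (TY R v)) := Hom_TX R rfl (Hom_TY R rfl hv)
      funext i
      by_cases hi : i = a
      · subst hi
        change TX R (TY R v) i = ((c + _) • v) i
        rw [TX_apply, TY_apply, hva]
        simpa [hva] using hv0'
      · change TX R (TY R v) i = ((c + _) • v) i
        rw [h0 i hi, Pi.smul_apply, hv i hi, smul_zero]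
    | succ k ih =>
      rw [Hom_rel R (hyH (k + 1)), hys, ih, map_smul, Finset.sum_range_succ, ← add_smul]
      have e : a + ((k + 1 : ℕ) : ZMod ℓ) = a + 1 + (k : ZMod ℓ) := by push_cast; ring
      rw [e, add_assoc]
  have hz : ∃ k, y k = 0 := by
    obtain ⟨k, hk⟩ := exists_zero_of_eigen (TX R ∘ₗ TY R) (fun k => y (ℓ * k))
      (fun k => c + k * ∑ i, θ i) (by
        intro p q hpq
        simpa [ha] using hpq)
      (fun k => by
        have := hyE (ℓ * k)
        rw [up_mul] at this
        exact this)
    exact ⟨_, hk⟩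
  classical
  have hmin := Nat.find_spec hz
  have hlt := fun m => Nat.find_min (m := m) hz
  rcases hk : Nat.find hz with _ | k
  · rw [hk] at hmin; exact absurd hmin hvne
  · rw [hk] at hmin
    exact ⟨_, y k, hyH k, hlt k (by omega), by rw [← hys]; exact hmin⟩

/-- The string of vectors below a vector killed by `Y`. -/
def str (w : Tot d) (m : ℕ) : Tot d := (TX R)^[m] w

lemma str_succ (w : Tot d) (m : ℕ) : str R w (m + 1) = TX R (str R w m) :=
  Function.iterate_succ_apply' _ _ _

lemma str_Hom {b : ZMod ℓ} {w : Tot d} (hw : Hom b w) (m : ℕ) : Hom (b - (m : ZMod ℓ)) (str R w m) := by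
  induction m with
  | zero => simpa [str] using hw
  | succ m ih =>
    rw [str_succ]
    exact Hom_TX R (by push_cast; ring) ih

lemma str_Y {b : ZMod ℓ} {w : Tot d} (hw : Hom b w) (hY : TY R w = 0) (m : ℕ) :
    TY R (str R w (m + 1)) = (-arc ℓ b (m + 1) θ) • str R w m := by
  induction m with
  | zero =>
    have := Hom_rel R hw
    rw [hY, map_zero] at this
    rw [str_succ]
    simp only [str, Function.iterate_zero, id, arc, Finset.sum_range_one, Nat.cast_zero, sub_zero,
      zero_add]
    rw [neg_smul]
    exact eq_neg_of_add_eq_zero_left this.symm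
  | succ m ih =>
    have h1 := Hom_rel R (str_Hom R hw (m + 1))
    rw [ih, map_smul, ← str_succ, ← str_succ] at h1
    rw [eq_sub_of_add_eq h1.symm, ← sub_smul]
    congr 1
    simp only [arc, Finset.sum_range_succ _ (m + 1)]
    ring

lemma str_zero [NeZero ℓ] (ha : ∑ i : ZMod ℓ, θ i ≠ 0) {b : ZMod ℓ} {w : Tot d}
    (hw : Hom b w) (hw0 : w ≠ 0) (hY : TY R w = 0) :
    ∃ n, str R w n ≠ 0 ∧ str R w (n + 1) = 0 ∧ arc ℓ b (n + 1) θ = 0 := by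
  have hz : ∃ k, str R w k = 0 := by
    obtain ⟨k, hk⟩ := exists_zero_of_eigen (TY R ∘ₗ TX R) (fun k => str R w (ℓ * (k + 1) - 1))
      (fun k => -(((k + 1 : ℕ) : ℂ) * ∑ i, θ i)) (by
        intro p q hpq
        simpa [ha] using hpq)
      (fun k => by
        have := str_Y R hw hY (ℓ * (k + 1) - 1)
        have hp : 0 < ℓ * (k + 1) := Nat.mul_pos (NeZero.pos ℓ) (by omega)
        rw [str_succ, Nat.sub_add_cancel hp, arc_mul] at this
        exact this)
    exact ⟨_, hk⟩
  classical
  have hmin := Nat.find_spec hz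
  have hlt := fun m => Nat.find_min (m := m) hz
  rcases hk : Nat.find hz with _ | k
  · rw [hk] at hmin; exact absurd hmin hw0
  · rw [hk] at hmin
    have h1 : str R w k ≠ 0 := hlt k (by omega)
    refine ⟨k, h1, hmin, ?_⟩
    have h2 := str_Y R hw hY k
    rw [hmin, map_zero] at h2
    simpa [h1] using h2.symm

lemma iter_coord (w y : Tot d) (b : ZMod ℓ) (h : w b = y b) (m : ℕ) :
    str R w m (b - m) = str R y m (b - m) := by
  suffices hs : ∀ c : ZMod ℓ, c = b - m → str R w m c = str R y m c from hs _ rfl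
  induction m with
  | zero =>
    intro c hc
    have hc' : c = b := by simpa using hc
    subst hc'
    exact h
  | succ m ih =>
    intro c hc
    rw [str_succ, str_succ, TX_apply, TX_apply, ih (c + 1) (by rw [hc]; push_cast; ring)]

lemma str_eq_zero_of_le (w : Tot d) {n m : ℕ} (h : n ≤ m) (hn : str R w n = 0) :
    str R w m = 0 := by
  induction m, h using Nat.le_induction with
  | base => exact hn
  | succ m _ ih => rw [str_succ, ih, map_zero]

lemma str_str (w : Tot d) (n m : ℕ) : str R (str R w m) n = str R w (n + m) :=
  (Function.iterate_add_apply _ _ _ _).symm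

lemma simple_dim [NeZero ℓ] (hR : IsSimple R) {b : ZMod ℓ} {w : Tot d}
    (hw : Hom b w) (hw0 : w ≠ 0) (hY : TY R w = 0) (n : ℕ) (hn : str R w n ≠ 0)
    (hn1 : str R w (n + 1) = 0) (hb : θ b = 0) :
    d = fun i' => if i' = b then 1 else 0 := by
  have hX : TX R w = 0 := by
    let M : Submodule ℂ (Tot d) := Submodule.span ℂ (Set.range fun m => str R w (m + 1))
    have hMX : ∀ v ∈ M, TX R v ∈ M := by
      intro v hv
      induction hv using Submodule.span_induction with
      | mem x hx =>
        obtain ⟨m, rfl⟩ := hx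
        exact Submodule.subset_span ⟨m + 1, str_succ R w (m + 1)⟩
      | zero => simp
      | add x y _ _ hx hy => rw [map_add]; exact M.add_mem hx hy
      | smul c x _ hx => rw [map_smul]; exact M.smul_mem c hx
    have hMY : ∀ v ∈ M, TY R v ∈ M := by
      intro v hv
      induction hv using Submodule.span_induction with
      | mem x hx =>
        obtain ⟨m, rfl⟩ := hx
        change TY R (str R w (m + 1)) ∈ M
        rw [str_Y R hw hY]
        obtain _ | m := m
        · simp [arc, hb]
        · exact M.smul_mem _ (Submodule.subset_span ⟨m, rfl⟩)
      | zero => simp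
      | add x y _ _ hx hy => rw [map_add]; exact M.add_mem hx hy
      | smul c x _ hx => rw [map_smul]; exact M.smul_mem c hx
    rcases hR.2 (subOf R M hMX hMY) with h | h
    · have h1 : TX R w ∈ M := Submodule.subset_span ⟨0, rfl⟩
      funext i
      have h2 : TX R w i ∈ (subOf R M hMX hMY).U i := ⟨_, h1, rfl⟩
      rw [h i] at h2
      simpa using h2
    · exfalso
      have h1 : w b ∈ (subOf R M hMX hMY).U b := by rw [h b]; trivial
      obtain ⟨y, hy, hyb⟩ := h1
      have h2 : ∀ v ∈ M, str R v n = 0 := by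
        intro v hv
        have : M ≤ LinearMap.ker ((TX R) ^ n) := by
          refine Submodule.span_le.2 ?_
          rintro _ ⟨m, rfl⟩
          change ((TX R) ^ n) (str R w (m + 1)) = 0
          rw [Module.End.pow_apply]
          change str R (str R w (m + 1)) n = 0
          rw [str_str]
          exact str_eq_zero_of_le R w (by omega) hn1
        have := this hv
        rw [LinearMap.mem_ker, Module.End.pow_apply] at this
        exact this
      have h3 := iter_coord R w y b hyb.symm n
      rw [h2 y hy] at h3
      exact hn (Hom_eq (str_Hom R hw n) h3)
  let M : Submodule ℂ (Tot d) := Submodule.span ℂ {w}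
  have hMX : ∀ v ∈ M, TX R v ∈ M := by
    intro v hv
    obtain ⟨c, rfl⟩ := Submodule.mem_span_singleton.1 hv
    simp [hX]
  have hMY : ∀ v ∈ M, TY R v ∈ M := by
    intro v hv
    obtain ⟨c, rfl⟩ := Submodule.mem_span_singleton.1 hv
    simp [hY]
  have hwb : w b ≠ 0 := fun h => hw0 (Hom_eq hw h)
  have hU : ∀ i, (subOf R M hMX hMY).U i = Submodule.span ℂ {w i} := by
    intro i
    change M.map _ = _
    rw [Submodule.map_span, Set.image_singleton]
    rfl
  rcases hR.2 (subOf R M hMX hMY) with h | h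
  · exfalso
    have := h b
    rw [hU, Submodule.span_singleton_eq_bot] at this
    exact hwb this
  · funext i
    have h1 := h i
    rw [hU] at h1
    have h2 : Module.finrank ℂ (Submodule.span ℂ {w i}) = d i := by
      rw [h1, finrank_top]; simp
    by_cases hi : i = b
    · subst hi
      rw [finrank_span_singleton hwb] at h2
      simp [← h2]
    · rw [hw i hi] at h2
      have h3 : Module.finrank ℂ (Submodule.span ℂ {(0 : Fin (d i) → ℂ)}) = 0 := by
        rw [Submodule.span_zero_singleton, finrank_bot]
      rw [if_neg hi, ← h2, h3]

end total

/-- For `θ` `J`-standard with `∑ θ_i ≠ 0`, the dimension vectors of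
simple `θ`-representations of the double cyclic quiver are exactly the standard basis
vectors `e_i` with `i ∈ J`. -/
theorem simple_dims_eq_basis (ℓ : ℕ) [NeZero ℓ] (hℓ : 2 ≤ ℓ) (J : Set (ZMod ℓ))
    (θ : ZMod ℓ → ℂ) (hst : JStandard ℓ J θ) (ha : ∑ i : ZMod ℓ, θ i ≠ 0)
    (d : ZMod ℓ → ℕ) :
    (∃ R : Rep ℓ θ d, IsSimple R) ↔
      ∃ i ∈ J, d = fun i' => if i' = i then 1 else 0 := by
  constructor
  · rintro ⟨R, hR⟩
    obtain ⟨a, hda⟩ := hR.1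
    obtain ⟨b, w, hw, hw0, hY⟩ := exists_top R ha a hda
    obtain ⟨n, hn, hn1, harc⟩ := str_zero R ha hw hw0 hY
    have hdvd : ¬ ℓ ∣ n + 1 := by
      rintro ⟨k, hk⟩
      rw [hk, arc_mul] at harc
      have : k = 0 := by simpa [ha] using harc
      subst this
      simp at hk
    have hbJ := std_mem ℓ hℓ J θ hst b (n + 1) hdvd harc
    exact ⟨b, hbJ, simple_dim R hR hw hw0 hY n hn hn1 (std_zero ℓ J θ hst b hbJ)⟩
  · rintro ⟨i, hi, rfl⟩
    have hθ := std_zero ℓ J θ hst i hi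
    have hsub : ∀ a : ZMod ℓ, a ≠ i → Subsingleton (Fin (if a = i then 1 else 0) → ℂ) := by
      intro a ha
      rw [if_neg ha]
      infer_instance
    refine ⟨⟨fun _ => 0, fun _ => 0, ?_⟩, ⟨i, by simp⟩, ?_⟩
    · intro a
      by_cases h : a + 1 = i
      · rw [h, hθ]; simp
      · have := hsub _ h
        ext1
        exact Subsingleton.elim _ _
    · intro S
      have h0 : Module.finrank ℂ (Fin (if i = i then 1 else 0) → ℂ) = 1 := by simp
      have : IsSimpleModule ℂ (Fin (if i = i then 1 else 0) → ℂ) :=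
        isSimpleModule_iff_finrank_eq_one.2 h0
      rcases eq_bot_or_eq_top (S.U i) with h | h
      · left
        intro a
        by_cases hai : a = i
        · subst hai; exact h
        · have := hsub _ hai
          exact Subsingleton.elim _ _
      · right
        intro a
        by_cases hai : a = i
        · subst hai; exact h
        · have := hsub _ hai
          exact Subsingleton.elim _ _

end CM
end
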